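/- Let M = {F = 0} be a germ of an irreducible singular real-analytic Levi-flat hypersurface at 0 ∈ ℂⁿ, n ≥ 2, such that F(z) = Re(z₁ ⋯ zₙ) + H(z, z̄), where H(z, z̄) = O(|z|^{n+1}) and H(z, z̄) = conj(H(z̄, z)). Suppose that Sing(M_ℂ) equals the union over all 1 ≤ i < j ≤ n and 1 ≤ k < ℓ ≤ n of the linear subspaces V_{ijkℓ} = {(z,w) ∈ ℂⁿ × ℂⁿ : z_i = z_j = w_k = w_ℓ = 0}, and that Sing(M_ℂ) is contained in the closure of Sing(L_ℂ). Then there exists a germ of holomorphic function f at 0 ∈ ℂⁿ with f(z) = z₁ ⋯ zₙ + O(|z|^{n+1}) such that M = {Re(f) = 0} as germs of sets at 0. -/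

import Mathlib

/-!
On the complexified hypersurface `{F_ℂ = 0}` in the variables `(z, w)`, the Levi foliation has a
holomorphic first integral in separated form `a(z) + d(w)`, and this first integral is divisible
by `F_ℂ`.

Since `F_ℂ = (z₁⋯zₙ + w₁⋯wₙ) / 2 + O(n + 1)`, a dilation turns `2 F_ℂ` into a function `G` which,
on a ball of a large prescribed radius, is as close as needed to the model `z₁⋯zₙ + w₁⋯wₙ`. Fix an
index `e`. Where the coordinates of index `≠ e` of `w` stay in an annulus, the equation `G = 0` is
solved for `w_e` by a holomorphic function `γ (z, w)`, defined for all `z` in a polydisc around the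
origin.

Levi-flatness says that at the points `(p, p̄)` of `{G = 0}` the mixed second derivative of `G`
vanishes on `ker ∂_z G × ker ∂_w G`. The conjugate diagonal is a uniqueness set, so the same holds
on the whole chart. Consequently `ker ∂_z G` at a zero `(z, w)` depends on `z` only, and
`a(z) = γ (z, 1)` is constant along the leaves `{z : G (z, w) = 0}`. Its value on the leaf of `w`
is `-d(w)`; so `a(z) + d(w) = 0` on the chart, while `a` and `d` are holomorphic on full polydiscs
around the origin.

A Cauchy integral over circles in the direction `z ↦ z + (t, …, t)` shows that
`a(z) + d(w) = U F_ℂ` near the origin with `U(0) ≠ 0`. Normalising `U(0) = 1` and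
`a(0) = d(0) = 0`, the function `f(z) = a(z) + conj (d(z̄))` satisfies `Re f = Re (U(z, z̄)) F`,
where `Re (U(z, z̄))` tends to `1`, and comparing terms of lowest order gives
`f = z₁⋯zₙ + O(n + 1)`.
-/

open Filter Topology

/-- Wirtinger derivative ∂/∂z_j of a (complex-valued) function at `p`:
`(1/2)(∂F/∂x_j − i ∂F/∂y_j)`. -/
noncomputable def wirtZ {n : ℕ} (F : (Fin n → ℂ) → ℂ) (j : Fin n) (p : Fin n → ℂ) : ℂ :=
  (fderiv ℝ F p (Pi.single j 1) - Complex.I * fderiv ℝ F p (Pi.single j Complex.I)) / 2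

/-- Wirtinger derivative ∂/∂z̄_j of a (complex-valued) function at `p`:
`(1/2)(∂F/∂x_j + i ∂F/∂y_j)`. -/
noncomputable def wirtZbar {n : ℕ} (F : (Fin n → ℂ) → ℂ) (j : Fin n) (p : Fin n → ℂ) : ℂ :=
  (fderiv ℝ F p (Pi.single j 1) + Complex.I * fderiv ℝ F p (Pi.single j Complex.I)) / 2

/-- The germ `M = {F = 0}` at `0` is Levi-flat: for every point `p` of `M* = M \ Sing(M)`
near `0` and every `v` with `Σ_j F_{z_j}(p) v_j = 0` one has
`Σ_{i,j} F_{z_i z̄_j}(p) v_i conj(v_j) = 0`. -/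
def LeviFlatGerm {n : ℕ} (F : (Fin n → ℂ) → ℝ) : Prop :=
  ∀ᶠ p in 𝓝 (0 : Fin n → ℂ), F p = 0 → fderiv ℝ F p ≠ 0 →
    ∀ v : Fin n → ℂ,
      (∑ j, wirtZ (fun z => ((F z : ℝ) : ℂ)) j p * v j) = 0 →
      (∑ i, ∑ j, wirtZbar (wirtZ (fun z => ((F z : ℝ) : ℂ)) i) j p * v i * (starRingEnd ℂ) (v j)) = 0

/-- `F` is irreducible in the ring of germs at `0` of real-valued real-analytic functions:
in any factorization `F = g·h` one of the factors is a unit (i.e. does not vanish at `0`). -/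
def IrreducibleRGerm {n : ℕ} (F : (Fin n → ℂ) → ℝ) : Prop :=
  ∀ g h : (Fin n → ℂ) → ℝ, AnalyticAt ℝ g 0 → AnalyticAt ℝ h 0 →
    (∀ᶠ z in 𝓝 (0 : Fin n → ℂ), F z = g z * h z) → g 0 ≠ 0 ∨ h 0 ≠ 0

/-- `φ` is a germ of biholomorphism `(ℂⁿ,0) → (ℂⁿ,0)` with local inverse `ι`. -/
def IsGermBiholo {n : ℕ} (φ ι : (Fin n → ℂ) → (Fin n → ℂ)) : Prop :=
  AnalyticAt ℂ φ 0 ∧ AnalyticAt ℂ ι 0 ∧ φ 0 = 0 ∧ ι 0 = 0 ∧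
  (∀ᶠ z in 𝓝 (0 : Fin n → ℂ), ι (φ z) = z) ∧ (∀ᶠ z in 𝓝 (0 : Fin n → ℂ), φ (ι z) = z)

/-- `φ` is volume-preserving (isochore): the determinant of its complex Jacobian is
identically `1` near `0`. -/
def IsVolumePreserving {n : ℕ} (φ : (Fin n → ℂ) → (Fin n → ℂ)) : Prop :=
  ∀ᶠ z in 𝓝 (0 : Fin n → ℂ), LinearMap.det ((fderiv ℂ φ z).toLinearMap) = 1

/-- `ψ` is a germ of automorphism of `(ℂ,0)`. -/
def IsGermAuto (ψ : ℂ → ℂ) : Prop :=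
  AnalyticAt ℂ ψ 0 ∧ ψ 0 = 0 ∧ deriv ψ 0 ≠ 0

/-- `FC` is the complexification of `F`: the (unique) germ of holomorphic function at
`0 ∈ ℂⁿ × ℂⁿ` such that `FC (z, z̄) = F z` near `0`. -/
def IsComplexification {n : ℕ} (F : (Fin n → ℂ) → ℝ)
    (FC : ((Fin n → ℂ) × (Fin n → ℂ)) → ℂ) : Prop :=
  AnalyticAt ℂ FC 0 ∧ ∀ᶠ z in 𝓝 (0 : Fin n → ℂ), FC (z, star z) = ((F z : ℝ) : ℂ)

/-- The singular set `Sing(M_ℂ) = {F_ℂ = 0} ∩ {dF_ℂ = 0}` of the complexification. -/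
def singMC {n : ℕ} (FC : ((Fin n → ℂ) × (Fin n → ℂ)) → ℂ) :
    Set ((Fin n → ℂ) × (Fin n → ℂ)) :=
  {p | FC p = 0 ∧ fderiv ℂ FC p = 0}

/-- The singular set of the complexified Levi foliation `L_ℂ`: points of
`M*_ℂ` at which `α = Σ_j (∂F_ℂ/∂z_j) dz_j` vanishes on `T_p M_ℂ = ker dF_ℂ(p)`.
Note that `α(p)(v) = dF_ℂ(p)(v₁, 0)`. -/
def singLC {n : ℕ} (FC : ((Fin n → ℂ) × (Fin n → ℂ)) → ℂ) :
    Set ((Fin n → ℂ) × (Fin n → ℂ)) :=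
  {p | FC p = 0 ∧ fderiv ℂ FC p ≠ 0 ∧
    ∀ v : (Fin n → ℂ) × (Fin n → ℂ), fderiv ℂ FC p v = 0 → fderiv ℂ FC p (v.1, 0) = 0}

/-! ### The conjugate diagonal -/

theorem eqOn_zero_ball_of_forall_ofReal {E : Type*} [NormedAddCommGroup E] [NormedSpace ℂ E]
    [CompleteSpace E] {φ : ℂ → E} {R : ℝ} (hR : 0 < R)
    (hφ : DifferentiableOn ℂ φ (Metric.ball 0 R)) (h : ∀ t : ℝ, |t| < R → φ t = 0) :
    Set.EqOn φ 0 (Metric.ball 0 R) := by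
  have h_ofReal : Tendsto ((↑) : ℝ → ℂ) (𝓝[≠] 0) (𝓝[≠] 0) := by
    simpa using Complex.continuous_ofReal.continuousWithinAt.tendsto_nhdsWithin
      (t := {0}ᶜ) (x := 0) (s := {0}ᶜ) fun t ht => by simpa using ht
  have h_zero : ∀ᶠ t : ℝ in 𝓝[≠] 0, φ t = 0 := by
    refine nhdsWithin_le_nhds ?_
    filter_upwards [Metric.ball_mem_nhds (0 : ℝ) hR] with t ht
    exact h t (by simpa using ht)
  exact (hφ.analyticOnNhd Metric.isOpen_ball).eqOn_zero_of_preconnected_of_frequently_eq_zero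
    (convex_ball _ _).isPreconnected (Metric.mem_ball_self hR)
    (h_ofReal.frequently h_zero.frequently)

theorem tendsto_prodMk_star_zero {V : Type*} [AddMonoid V] [StarAddMonoid V] [TopologicalSpace V]
    [ContinuousStar V] : Tendsto (fun z : V => (z, star z)) (𝓝 0) (𝓝 0) :=
  Continuous.tendsto' (by fun_prop) _ _ (by simp)

section Diagonal

variable {V : Type*} [NormedAddCommGroup V] [NormedSpace ℂ V] [StarAddMonoid V]
  [NormedStarGroup V] [StarModule ℂ V]

variable (V) in
/-- The real-linear embedding `z ↦ (z, z̄)`. Its image is the totally real subspace on which a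
complexification `F_ℂ` takes the values of `F`. -/
noncomputable def conjDiag : V →L[ℝ] V × V :=
  (ContinuousLinearMap.id ℝ V).prod (starL' ℝ : V ≃L[ℝ] V)

theorem conjDiag_apply (z : V) : conjDiag V z = (z, star z) := rfl

theorem norm_conjDiag (z : V) : ‖conjDiag V z‖ = ‖z‖ := by
  simp [conjDiag_apply, Prod.norm_def]

theorem exists_add_I_smul_eq (z w : V) : ∃ α β : V, ‖α‖ ≤ max ‖z‖ ‖w‖ ∧ ‖β‖ ≤ max ‖z‖ ‖w‖ ∧
    α + Complex.I • β = z ∧ star α + Complex.I • star β = w := by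
  have hz := le_max_left ‖z‖ ‖w‖
  have hw := le_max_right ‖z‖ ‖w‖
  refine ⟨(2 : ℂ)⁻¹ • (z + star w), (2 * Complex.I)⁻¹ • (z - star w), ?_, ?_, ?_, ?_⟩
  · have := norm_add_le z (star w)
    rw [norm_star] at this
    rw [norm_smul, norm_inv, Complex.norm_ofNat]
    linarith
  · have := norm_sub_le z (star w)
    rw [norm_star] at this
    rw [norm_smul, norm_inv, norm_mul, Complex.norm_ofNat, Complex.norm_I]
    linarith
  · rw [smul_smul, mul_inv, mul_left_comm, mul_inv_cancel₀ Complex.I_ne_zero]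
    module
  · simp only [star_smul, star_add, star_sub, star_star, star_inv₀, star_mul', star_ofNat,
      RCLike.star_def, Complex.conj_I, smul_smul, mul_inv, inv_neg, mul_neg]
    rw [mul_left_comm, mul_inv_cancel₀ Complex.I_ne_zero]
    module

/-- Every point near the diagonal lies at parameter `s = i` on a complex line
`s ↦ (α + s β, ᾱ + s β̄)`, whose points with real `s` are on the diagonal. -/
theorem eq_zero_of_eq_zero_on_conjDiag {K : V × V → ℂ} {p : V} {r : ℝ}
    (hK : DifferentiableOn ℂ K (Metric.ball (p, star p) r))
    (h0 : ∀ z ∈ Metric.ball p r, K (z, star z) = 0) :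
    ∀ q ∈ Metric.ball (p, star p) (r / 4), K q = 0 := by
  rintro ⟨z, w⟩ hq
  obtain ⟨α, β, hα, hβ, hz, hw⟩ := exists_add_I_smul_eq (z - p) (w - star p)
  have hr : max ‖z - p‖ ‖w - star p‖ < r / 4 := by
    simpa [Metric.mem_ball, dist_eq_norm, Prod.dist_eq] using hq
  let line : ℂ → V × V := fun s => (p + (α + s • β), star p + (star α + s • star β))
  have norm_lt : ∀ s : ℂ, ‖s‖ < 2 → ∀ a b : V, ‖a‖ = ‖α‖ → ‖b‖ = ‖β‖ → ‖a + s • b‖ < r := by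
    intro s hs a b ha hb
    have h_mul : ‖s‖ * ‖b‖ ≤ 2 * (r / 4) :=
      mul_le_mul hs.le (hb.trans_le (hβ.trans hr.le)) (norm_nonneg _) zero_le_two
    calc ‖a + s • b‖ ≤ ‖a‖ + ‖s‖ * ‖b‖ := (norm_add_le _ _).trans_eq (by rw [norm_smul])
      _ < r := by linarith [norm_nonneg α]
  have maps_line : Set.MapsTo line (Metric.ball 0 2) (Metric.ball (p, star p) r) := by
    intro s hs
    rw [mem_ball_zero_iff] at hs
    rw [mem_ball_iff_norm, Prod.norm_def, max_lt_iff]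
    simpa [line] using And.intro (norm_lt s hs α β rfl rfl)
      (norm_lt s hs (star α) (star β) (norm_star α) (norm_star β))
  have h_real : ∀ t : ℝ, |t| < 2 → K (line t) = 0 := by
    intro t ht
    have h_line : line t = (p + (α + (t : ℂ) • β), star (p + (α + (t : ℂ) • β))) := by
      simp [line, star_smul]
    rw [h_line]
    exact h0 _ (by simpa using norm_lt t (by simpa using ht) α β rfl rfl)
  have h_I := eqOn_zero_ball_of_forall_ofReal two_pos
    (hK.comp (by fun_prop : Differentiable ℂ line).differentiableOn maps_line) h_real
    (show Complex.I ∈ Metric.ball (0 : ℂ) 2 by simp)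
  simpa [line, hz, hw] using h_I

theorem eq_zero_of_forall_conjDiag_eq_zero {K : V × V → ℂ} (hK : Differentiable ℂ K)
    (h0 : ∀ z, K (z, star z) = 0) (q : V × V) : K q = 0 := by
  refine eq_zero_of_eq_zero_on_conjDiag (p := 0) (r := 4 * (‖q‖ + 1)) hK.differentiableOn
    (fun z _ => h0 z) q ?_
  rw [mem_ball_iff_norm, star_zero, Prod.mk_zero_zero, sub_zero]
  linarith

theorem apply_const_eq_zero_of_isBigO_conjDiag {k : ℕ}
    {P : ContinuousMultilinearMap ℂ (fun _ : Fin k => V × V) ℂ}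
    (hP : (fun z : V => P fun _ => (z, star z)) =O[𝓝 0] fun z => ‖z‖ ^ (k + 1)) (q : V × V) :
    P (fun _ => q) = 0 := by
  refine eq_zero_of_forall_conjDiag_eq_zero (K := fun q => P fun _ => q) ?_ (fun z => ?_) q
  · exact ((P.contDiff (n := 1)).differentiable one_ne_zero).comp
      (differentiable_pi.2 fun _ => differentiable_id)
  · exact Asymptotics.IsBigO.continuousMultilinearMap_apply_eq_zero
      (p := (P.restrictScalars ℝ).compContinuousLinearMap fun _ => conjDiag V) hP z

/-- The homogeneous terms of degree `< N` vanish on the diagonal one after the other, hence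
identically. -/
theorem isBigO_norm_pow_of_conjDiag {N : ℕ} {E : V × V → ℂ} (hE : AnalyticAt ℂ E 0)
    (h0 : (fun z : V => E (z, star z)) =O[𝓝 0] fun z => ‖z‖ ^ N) :
    E =O[𝓝 0] fun q => ‖q‖ ^ N := by
  obtain ⟨p, hp⟩ := hE
  have h_taylor : ∀ k, (∀ i < k, ∀ q, p i (fun _ => q) = 0) → ∀ q, p.partialSum k q = 0 :=
    fun k hk q => Finset.sum_eq_zero fun i hi => hk i (Finset.mem_range.1 hi) q
  have h_term : ∀ k < N, ∀ q, p k (fun _ => q) = 0 := by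
    intro k
    induction k using Nat.strong_induction_on with
    | _ k ih =>
      intro hk
      refine apply_const_eq_zero_of_isBigO_conjDiag ?_
      have h_sub : (fun q => E q - p k fun _ => q) =O[𝓝 0] fun q => ‖q‖ ^ (k + 1) := by
        simpa [FormalMultilinearSeries.partialSum, Finset.sum_range_succ,
          Finset.sum_eq_zero fun i hi => ih i (Finset.mem_range.1 hi)
            ((Finset.mem_range.1 hi).trans hk) _] using hp.isBigO_sub_partialSum_pow (k + 1)
      have h_diag : (fun z : V => E (z, star z)) =O[𝓝 0] fun z => ‖z‖ ^ (k + 1) := by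
        rcases (Nat.succ_le_of_lt hk).eq_or_lt with rfl | hlt
        exacts [h0, h0.trans (Asymptotics.isLittleO_norm_pow_norm_pow hlt).isBigO]
      refine (h_diag.sub ((h_sub.comp_tendsto tendsto_prodMk_star_zero).congr_right
        fun z => ?_)).congr_left fun z => ?_
      · exact congrArg (· ^ (k + 1)) (norm_conjDiag z)
      · simp
  simpa [h_taylor N h_term] using hp.isBigO_sub_partialSum_pow N

end Diagonal

/-! ### Levi-flatness on the complexification -/

section LeviCondition

variable {V W E : Type*} [NormedAddCommGroup V] [NormedSpace ℂ V] [NormedAddCommGroup W]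
  [NormedSpace ℂ W] [NormedAddCommGroup E] [NormedSpace ℂ E]

/-- The complexified Levi condition for `{G = 0}` at `q`: the mixed second derivative of `G`
vanishes on the product of the kernels of the two partial derivatives of `G`. -/
def LeviAt (G : V × W → ℂ) (q : V × W) : Prop :=
  ∀ v u, fderiv ℂ G q (v, 0) = 0 → fderiv ℂ G q (0, u) = 0 →
    fderiv ℂ (fderiv ℂ G) q (0, u) (v, 0) = 0

theorem map_prodMk_eq_add (D : V × W →L[ℂ] E) (v : V) (w : W) :
    D (v, w) = D (v, 0) + D (0, w) := by
  rw [← map_add]; simp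

theorem map_smul_prodMk_zero (D : V × W →L[ℂ] E) (c : ℂ) (v : V) :
    D (c • v, 0) = c • D (v, 0) := by
  rw [← map_smul]; simp

theorem map_prodMk_zero_smul (D : V × W →L[ℂ] E) (c : ℂ) (w : W) :
    D (0, c • w) = c • D (0, w) := by
  rw [← map_smul]; simp

end LeviCondition

section Polarization

variable {V : Type*} [NormedAddCommGroup V] [NormedSpace ℂ V] [StarAddMonoid V] [StarModule ℂ V]

/-- Polarization, as the uniqueness of holomorphic functions on the diagonal of `ℂ² × ℂ²`. -/
theorem apply_eq_zero_of_forall_apply_star_self {B : V →L[ℂ] V →L[ℂ] ℂ} {S : Submodule ℂ V}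
    (hB : ∀ v ∈ S, B (star v) v = 0) {u v : V} (hu : star u ∈ S) (hv : v ∈ S) : B u v = 0 := by
  let K : (ℂ × ℂ) × (ℂ × ℂ) → ℂ := fun x =>
    B (x.2.1 • star v + x.2.2 • u) (x.1.1 • v + x.1.2 • star u)
  have h_diag : ∀ x : ℂ × ℂ, K (x, star x) = 0 := fun x => by
    simpa [K, star_smul] using hB _ (S.add_mem (S.smul_mem x.1 hv) (S.smul_mem x.2 hu))
  simpa [K] using eq_zero_of_forall_conjDiag_eq_zero (K := K) (by fun_prop) h_diag ((1, 0), (0, 1))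

theorem map_prodMk_zero_eq_zero_iff {D : V × V →L[ℂ] ℂ} (hD : ∀ v, (D (v, star v)).im = 0)
    (v : V) : D (v, 0) = 0 ↔ D (0, star v) = 0 := by
  have h_one := hD v
  have h_I := hD (Complex.I • v)
  rw [map_prodMk_eq_add, star_smul, map_smul_prodMk_zero, map_prodMk_zero_smul] at h_I
  rw [map_prodMk_eq_add] at h_one
  simp only [Complex.add_im, smul_eq_mul, RCLike.star_def, Complex.conj_I, Complex.mul_im,
    Complex.neg_re, Complex.neg_im, Complex.I_re, Complex.I_im] at h_one h_I
  constructor <;> intro h <;> rw [h] at h_one h_I <;> refine Complex.ext ?_ ?_ <;>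
    simp only [Complex.zero_re, Complex.zero_im] at h_one h_I ⊢ <;> linarith

end Polarization

section Wirtinger

variable {n : ℕ} {K : (Fin n → ℂ) × (Fin n → ℂ) → ℂ}
  {K' : (Fin n → ℂ) × (Fin n → ℂ) →L[ℂ] ℂ} {p : Fin n → ℂ}

theorem hasFDerivAt_comp_conjDiag (hK : HasFDerivAt K K' (p, star p)) :
    HasFDerivAt (fun z => K (z, star z)) ((K'.restrictScalars ℝ).comp (conjDiag (Fin n → ℂ))) p :=
  (hK.restrictScalars ℝ).comp p (conjDiag (Fin n → ℂ)).hasFDerivAt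

theorem fderiv_comp_conjDiag_single_one (hK : HasFDerivAt K K' (p, star p)) (j : Fin n) :
    fderiv ℝ (fun z => K (z, star z)) p (Pi.single j 1) =
      K' (Pi.single j 1, 0) + K' (0, Pi.single j 1) := by
  rw [(hasFDerivAt_comp_conjDiag hK).fderiv, ← map_prodMk_eq_add]
  change K' (Pi.single j 1, star (Pi.single j 1)) = _
  rw [← Pi.single_star, star_one]

theorem fderiv_comp_conjDiag_single_I (hK : HasFDerivAt K K' (p, star p)) (j : Fin n) :
    fderiv ℝ (fun z => K (z, star z)) p (Pi.single j Complex.I) =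
      Complex.I * (K' (Pi.single j 1, 0) - K' (0, Pi.single j 1)) := by
  have h_I : (Pi.single j Complex.I : Fin n → ℂ) = Complex.I • Pi.single j 1 := by
    rw [← Pi.single_smul, smul_eq_mul, mul_one]
  have h_star : star (Pi.single j Complex.I : Fin n → ℂ) = (-Complex.I) • Pi.single j 1 := by
    rw [← Pi.single_star, ← Pi.single_smul, smul_eq_mul, mul_one]; simp
  rw [(hasFDerivAt_comp_conjDiag hK).fderiv]
  change K' (Pi.single j Complex.I, star (Pi.single j Complex.I)) = _
  rw [h_star, h_I, map_prodMk_eq_add, map_smul_prodMk_zero, map_prodMk_zero_smul]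
  simp only [smul_eq_mul]
  ring

theorem wirtZ_comp_conjDiag (hK : HasFDerivAt K K' (p, star p)) (j : Fin n) :
    wirtZ (fun z => K (z, star z)) j p = K' (Pi.single j 1, 0) := by
  rw [wirtZ, fderiv_comp_conjDiag_single_one hK, fderiv_comp_conjDiag_single_I hK, ← mul_assoc,
    Complex.I_mul_I]
  ring

theorem wirtZbar_comp_conjDiag (hK : HasFDerivAt K K' (p, star p)) (j : Fin n) :
    wirtZbar (fun z => K (z, star z)) j p = K' (0, Pi.single j 1) := by
  rw [wirtZbar, fderiv_comp_conjDiag_single_one hK, fderiv_comp_conjDiag_single_I hK, ← mul_assoc,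
    Complex.I_mul_I]
  ring

theorem sum_map_single_mul (L : (Fin n → ℂ) →L[ℂ] ℂ) (v : Fin n → ℂ) :
    ∑ j, L (Pi.single j 1) * v j = L v := by
  conv_rhs => rw [pi_eq_sum_univ' v, map_sum]
  refine Finset.sum_congr rfl fun j _ => ?_
  rw [map_smul, smul_eq_mul, mul_comm]

theorem sum_sum_apply_single_mul (B : (Fin n → ℂ) →L[ℂ] (Fin n → ℂ) →L[ℂ] ℂ) (u v : Fin n → ℂ) :
    ∑ i, ∑ j, B (Pi.single j 1) (Pi.single i 1) * v i * u j = B u v := by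
  rw [← sum_map_single_mul (B u) v]
  refine Finset.sum_congr rfl fun i _ => ?_
  rw [← B.flip_apply, ← sum_map_single_mul (B.flip (Pi.single i 1)) u, Finset.sum_mul]
  exact Finset.sum_congr rfl fun j _ => mul_right_comm _ _ _

end Wirtinger

section Complexification

variable {n : ℕ} {F : (Fin n → ℂ) → ℝ} {FC : (Fin n → ℂ) × (Fin n → ℂ) → ℂ} {p : Fin n → ℂ}

theorem fderiv_apply_prodMk_star (hev : ∀ᶠ z in 𝓝 p, FC (z, star z) = ((F z : ℝ) : ℂ))
    (hd : DifferentiableAt ℂ FC (p, star p)) (v : Fin n → ℂ) :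
    fderiv ℂ FC (p, star p) (v, star v) = ((fderiv ℝ F p v : ℝ) : ℂ) := by
  have h_diag := hasFDerivAt_comp_conjDiag hd.hasFDerivAt
  have hF : DifferentiableAt ℝ F p := by
    refine (Complex.reCLM.hasFDerivAt.comp p h_diag).differentiableAt.congr_of_eventuallyEq ?_
    filter_upwards [hev] with z hz using by simp [hz]
  have h_unique := (Complex.ofRealCLM.hasFDerivAt.comp p hF.hasFDerivAt).unique
    (h_diag.congr_of_eventuallyEq (hev.mono fun z hz => hz.symm))
  exact (DFunLike.congr_fun h_unique v).symm

theorem wirtZ_eq_fderiv_complexification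
    (hev : ∀ᶠ z in 𝓝 p, FC (z, star z) = ((F z : ℝ) : ℂ))
    (hd : DifferentiableAt ℂ FC (p, star p)) (i : Fin n) :
    wirtZ (fun z => ((F z : ℝ) : ℂ)) i p = fderiv ℂ FC (p, star p) (Pi.single i 1, 0) := by
  have h_eq : (fun z => ((F z : ℝ) : ℂ)) =ᶠ[𝓝 p] fun z => FC (z, star z) :=
    hev.mono fun z hz => hz.symm
  rw [← wirtZ_comp_conjDiag hd.hasFDerivAt, wirtZ, wirtZ, h_eq.fderiv_eq]

theorem wirtZbar_wirtZ_eq_fderiv_complexification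
    (hev : ∀ᶠ z in 𝓝 p, FC (z, star z) = ((F z : ℝ) : ℂ))
    (hA : AnalyticAt ℂ FC (p, star p)) (i j : Fin n) :
    wirtZbar (wirtZ (fun z => ((F z : ℝ) : ℂ)) i) j p =
      fderiv ℂ (fderiv ℂ FC) (p, star p) (0, Pi.single j 1) (Pi.single i 1, 0) := by
  have h_diag : Tendsto (fun z : Fin n → ℂ => (z, star z)) (𝓝 p) (𝓝 (p, star p)) :=
    Continuous.tendsto (by fun_prop) p
  have h_eq : wirtZ (fun z => ((F z : ℝ) : ℂ)) i
      =ᶠ[𝓝 p] fun z => fderiv ℂ FC (z, star z) (Pi.single i 1, 0) := by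
    filter_upwards [hev.eventually_nhds, h_diag.eventually hA.eventually_analyticAt] with z hz hAz
      using wirtZ_eq_fderiv_complexification hz hAz.differentiableAt i
  have h_deriv := hA.fderiv.differentiableAt.hasFDerivAt.clm_apply
    (hasFDerivAt_const ((Pi.single i 1, 0) : (Fin n → ℂ) × (Fin n → ℂ)) _)
  rw [wirtZbar, h_eq.fderiv_eq, ← wirtZbar, wirtZbar_comp_conjDiag h_deriv j]
  simp

/-- Levi-flatness of `F` is the case `u = v̄`; polarization gives the rest. -/
theorem eventually_leviAt_of_leviFlatGerm (hLF : LeviFlatGerm F) (hFC : IsComplexification F FC) :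
    ∀ᶠ p in 𝓝 (0 : Fin n → ℂ), FC (p, star p) = 0 → fderiv ℂ FC (p, star p) ≠ 0 →
      LeviAt FC (p, star p) := by
  filter_upwards [hLF, hFC.2.eventually_nhds,
    tendsto_prodMk_star_zero.eventually hFC.1.eventually_analyticAt]
    with p hL hev hA h_zero hne v u hv hu
  set D := fderiv ℂ FC (p, star p)
  set B := (fderiv ℂ (fderiv ℂ FC) (p, star p)).bilinearComp
    (.inr ℂ (Fin n → ℂ) (Fin n → ℂ)) (.inl ℂ (Fin n → ℂ) (Fin n → ℂ))
  have hD := fderiv_apply_prodMk_star hev hA.differentiableAt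
  have hF_zero : F p = 0 := by simpa [h_zero] using hev.self_of_nhds.symm
  have hF_smooth : fderiv ℝ F p ≠ 0 := fun h => hne <| ContinuousLinearMap.ext fun x =>
    eq_zero_of_forall_conjDiag_eq_zero D.differentiable (fun v => by rw [hD, h]; simp) x
  have h_levi : ∀ v, D (v, 0) = 0 → B (star v) v = 0 := by
    intro v hv
    rw [← sum_sum_apply_single_mul]
    have h_tangent : ∑ j, wirtZ (fun z => ((F z : ℝ) : ℂ)) j p * v j = 0 := by
      simp only [wirtZ_eq_fderiv_complexification hev hA.differentiableAt]
      exact (sum_map_single_mul (D.comp (.inl ℂ _ _)) v).trans hv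
    have h_form := hL hF_zero hF_smooth v h_tangent
    simp only [wirtZbar_wirtZ_eq_fderiv_complexification hev hA] at h_form
    exact h_form
  have hu' : D (star u, 0) = 0 := by
    rwa [map_prodMk_zero_eq_zero_iff (fun v => by rw [hD, Complex.ofReal_im]), star_star]
  exact apply_eq_zero_of_forall_apply_star_self (S := (D.comp (.inl ℂ _ _)).ker) h_levi hu' hv

end Complexification

/-! ### Tools from complex analysis -/

section StarConjugate

variable {V W : Type*} [NormedAddCommGroup V] [NormedSpace ℂ V] [StarAddMonoid V]
  [NormedStarGroup V] [StarModule ℂ V] [NormedAddCommGroup W] [NormedSpace ℂ W] [StarAddMonoid W]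
  [NormedStarGroup W] [StarModule ℂ W]

/-- The conjugate `m ↦ conj (p (m̄))` of a `ℂ`-multilinear map, which is again `ℂ`-multilinear:
the terms of the Taylor series of `z ↦ conj (f (z̄))` are the conjugates of those of `f`. -/
noncomputable def starConj {k : ℕ} (p : ContinuousMultilinearMap ℂ (fun _ : Fin k => V) W) :
    ContinuousMultilinearMap ℂ (fun _ : Fin k => V) W where
  toFun m := star (p (star ∘ m))
  map_update_add' m i x y := by
    simp only [Function.comp_update, star_add, p.map_update_add]
  map_update_smul' m i c x := by
    simp only [Function.comp_update, star_smul, p.map_update_smul, star_star]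
  cont := (p.cont.comp (continuous_pi fun i => (continuous_apply i).star)).star

theorem starConj_apply {k : ℕ} (p : ContinuousMultilinearMap ℂ (fun _ : Fin k => V) W)
    (m : Fin k → V) : starConj p m = star (p (star ∘ m)) :=
  rfl

theorem norm_starConj_le {k : ℕ} (p : ContinuousMultilinearMap ℂ (fun _ : Fin k => V) W) :
    ‖starConj p‖ ≤ ‖p‖ := by
  refine ContinuousMultilinearMap.opNorm_le_bound (norm_nonneg _) fun m => ?_
  calc ‖starConj p m‖ = ‖p (star ∘ m)‖ := norm_star _
    _ ≤ ‖p‖ * ∏ i, ‖m i‖ := by simpa using p.le_opNorm (star ∘ m)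

theorem analyticAt_star_comp_star {f : V → W} (hf : AnalyticAt ℂ f 0) :
    AnalyticAt ℂ (fun z => star (f (star z))) 0 := by
  obtain ⟨p, r, hp⟩ := hf
  refine ⟨fun k => starConj (p k), r,
    hp.r_le.trans (FormalMultilinearSeries.radius_le_of_le fun k => norm_starConj_le (p k)),
    hp.r_pos, fun {y} hy => ?_⟩
  have hy_star : star y ∈ Metric.eball (0 : V) r := by
    simpa [edist_zero_right, enorm_eq_nnnorm] using hy
  simpa [starConj_apply, Function.comp_def] using
    (hp.hasSum hy_star).map (starAddEquiv : W ≃+ W) continuous_star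

end StarConjugate

theorem continuous_deriv_circleMap_smul {X E : Type*} [TopologicalSpace X]
    [NormedAddCommGroup E] [NormedSpace ℂ E] {g : X × ℂ → E} {x : X} {c : ℂ} {R : ℝ} (hR : 0 ≤ R)
    (hg : ∀ t ∈ Metric.sphere c R, ContinuousAt g (x, t)) :
    Continuous fun θ => deriv (circleMap c R) θ • g (x, circleMap c R θ) := by
  have h_deriv : Continuous (deriv (circleMap c R)) := by
    simp only [funext (deriv_circleMap c R)]
    fun_prop
  refine h_deriv.smul (continuous_iff_continuousAt.2 fun θ => ?_)
  exact (hg _ (circleMap_mem_sphere c hR θ)).comp (f := fun θ => (x, circleMap c R θ))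
    (by fun_prop)

theorem differentiableAt_circleIntegral {V : Type*} [NormedAddCommGroup V] [NormedSpace ℂ V]
    [ProperSpace V] {f : V × ℂ → ℂ} {O : Set V} {c : ℂ} {R : ℝ} {q₀ : V} (hR : 0 ≤ R)
    (hO : IsOpen O) (hf : ∀ q ∈ O, ∀ t ∈ Metric.sphere c R, AnalyticAt ℂ f (q, t)) (hq₀ : q₀ ∈ O) :
    DifferentiableAt ℂ (fun q => ∮ t in C(c, R), f (q, t)) q₀ := by
  obtain ⟨ε, hε, h_ball⟩ := Metric.nhds_basis_closedBall.mem_iff.1 (hO.mem_nhds hq₀)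
  let f' : V × ℂ → V →L[ℂ] ℂ := fun x => (fderiv ℂ f x).comp (ContinuousLinearMap.inl ℂ V ℂ)
  have hf' : ∀ q ∈ O, ∀ t ∈ Metric.sphere c R, ContinuousAt f' (q, t) := fun q hq t ht =>
    (hf q hq t ht).fderiv.continuousAt.clm_comp continuousAt_const
  obtain ⟨C, hC⟩ := ((isCompact_closedBall q₀ ε).prod
    (isCompact_sphere c R)).exists_bound_of_continuousOn (f := f')
    fun x hx => (hf' x.1 (h_ball hx.1) x.2 hx.2).continuousWithinAt
  have h_cont := fun q hq => continuous_deriv_circleMap_smul hR fun t ht =>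
    (hf q hq t ht).continuousAt
  refine (intervalIntegral.hasFDerivAt_integral_of_dominated_of_fderiv_le (𝕜 := ℂ)
    (F' := fun q θ => deriv (circleMap c R) θ • f' (q, circleMap c R θ))
    (bound := fun _ => R * C) (Metric.closedBall_mem_nhds q₀ hε) ?_
    ((h_cont q₀ hq₀).intervalIntegrable _ _)
    (continuous_deriv_circleMap_smul hR (hf' q₀ hq₀)).aestronglyMeasurable
    (Eventually.of_forall fun θ _ q hq => ?_) (by simp)
    (Eventually.of_forall fun θ _ q hq => ?_)).differentiableAt
  · filter_upwards [hO.mem_nhds hq₀] with q hq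
    exact (h_cont q hq).aestronglyMeasurable
  · rw [norm_smul, deriv_circleMap, norm_mul, norm_circleMap_zero, Complex.norm_I, mul_one,
      abs_of_nonneg hR]
    exact mul_le_mul_of_nonneg_left (hC _ ⟨hq, circleMap_mem_sphere c hR θ⟩) hR
  · have h_fderiv :=
      (hf q (h_ball hq) _ (circleMap_mem_sphere c hR θ)).differentiableAt.hasFDerivAt
    exact (HasFDerivAt.comp (f := fun q => (q, circleMap c R θ)) q h_fderiv
      (hasFDerivAt_prodMk_left q _)).const_smul (deriv (circleMap c R) θ)

theorem eqOn_zero_of_convex_of_eventuallyEq_zero {V : Type*} [NormedAddCommGroup V]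
    [NormedSpace ℂ V] {K : V → ℂ} {B : Set V} (hB : IsOpen B) (hBc : Convex ℝ B)
    (hK : DifferentiableOn ℂ K B) {o : V} (ho : o ∈ B) (h0 : K =ᶠ[𝓝 o] 0) : Set.EqOn K 0 B := by
  intro q hq
  let line : ℂ → V := fun s => s • (q - o) + o
  have h_line : Differentiable ℂ line := by fun_prop
  have h_conv : Convex ℝ (line ⁻¹' B) :=
    (hBc.translate_preimage_left o).linear_preimage
      ((LinearMap.toSpanSingleton ℂ V (q - o)).restrictScalars ℝ)
  have h_analytic : AnalyticOnNhd ℂ (K ∘ line) (line ⁻¹' B) :=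
    (hK.comp h_line.differentiableOn fun _ hs => hs).analyticOnNhd (hB.preimage h_line.continuous)
  have h_zero : K ∘ line =ᶠ[𝓝 0] 0 :=
    (h_line.continuous.tendsto' 0 o (by simp [line])).eventually h0
  simpa [line] using h_analytic.eqOn_zero_of_preconnected_of_eventuallyEq_zero
    h_conv.isPreconnected (show (0 : ℂ) ∈ line ⁻¹' B by simpa [line] using ho) h_zero
    (show (1 : ℂ) ∈ line ⁻¹' B by simpa [line] using hq)

theorem differentiableAt_ite_div {φ g : ℂ → ℂ} {t : ℂ} (hφ : AnalyticAt ℂ φ t)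
    (hg : AnalyticAt ℂ g t) (h : g t = 0 → φ t = 0 ∧ deriv g t ≠ 0) :
    DifferentiableAt ℂ (fun s => if g s = 0 then deriv φ s / deriv g s else φ s / g s) t := by
  by_cases hgt : g t = 0
  · obtain ⟨hφt, hg't⟩ := h hgt
    have analyticAt_dslope : ∀ {u : ℂ → ℂ}, AnalyticAt ℂ u t → AnalyticAt ℂ (dslope u t) t :=
      fun ⟨_, hp⟩ => ⟨_, hp.has_fpower_series_dslope_fslope⟩
    have eq_mul_dslope : ∀ {u : ℂ → ℂ}, u t = 0 → ∀ s, u s = (s - t) * dslope u t s :=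
      fun {u} hu s => by simpa [hu] using (sub_smul_dslope u t s).symm
    have h_ne : dslope g t t ≠ 0 := by rwa [dslope_same]
    refine ((analyticAt_dslope hφ).div (analyticAt_dslope hg)
      h_ne).differentiableAt.congr_of_eventuallyEq ?_
    filter_upwards [(analyticAt_dslope hg).continuousAt.eventually_ne h_ne] with s hs
    rcases eq_or_ne s t with rfl | hst
    · simp [hgt, dslope_same]
    · have hst' : s - t ≠ 0 := sub_ne_zero.2 hst
      have hgs : g s ≠ 0 := by rw [eq_mul_dslope hgt]; exact mul_ne_zero hst' hs
      rw [if_neg hgs, Pi.div_apply, eq_mul_dslope hgt, eq_mul_dslope hφt,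
        mul_div_mul_left _ _ hst']
  · refine (hφ.div hg hgt).differentiableAt.congr_of_eventuallyEq ?_
    filter_upwards [hg.continuousAt.eventually_ne hgt] with s hs
    simp [hs]

theorem circleIntegral_inv_mul_div_eq {φ g : ℂ → ℂ}
    (hφ : ∀ t ∈ Metric.closedBall (0 : ℂ) 1, AnalyticAt ℂ φ t)
    (hg : ∀ t ∈ Metric.closedBall (0 : ℂ) 1, AnalyticAt ℂ g t)
    (h_zero : ∀ t ∈ Metric.closedBall (0 : ℂ) 1, g t = 0 → φ t = 0 ∧ deriv g t ≠ 0)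
    (h_sphere : ∀ t ∈ Metric.sphere (0 : ℂ) 1, g t ≠ 0) (h0 : g 0 ≠ 0) :
    (2 * Real.pi * Complex.I : ℂ)⁻¹ • (∮ t in C(0, 1), t⁻¹ * (φ t / g t)) = φ 0 / g 0 := by
  let k : ℂ → ℂ := fun t => if g t = 0 then deriv φ t / deriv g t else φ t / g t
  have hk : DiffContOnCl ℂ k (Metric.ball 0 1) := by
    refine DifferentiableOn.diffContOnCl fun t ht => ?_
    rw [closure_ball _ one_ne_zero] at ht
    exact (differentiableAt_ite_div (hφ t ht) (hg t ht) (h_zero t ht)).differentiableWithinAt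
  have h_congr : (∮ t in C(0, 1), t⁻¹ * (φ t / g t)) = ∮ t in C(0, 1), (t - 0)⁻¹ • k t :=
    circleIntegral.integral_congr zero_le_one fun t ht => by simp [k, h_sphere t ht]
  rw [h_congr, hk.two_pi_i_inv_smul_circleIntegral_sub_inv_smul (by simp)]
  simp [k, h0]

/-! ### Small perturbations of the product model -/

section ProductModel

variable {n : ℕ}

/-- The complexification `z₁⋯zₙ + w₁⋯wₙ` of the model `2 Re (z₁⋯zₙ)`. -/
noncomputable def prodModel (q : (Fin n → ℂ) × (Fin n → ℂ)) : ℂ := ∏ i, q.1 i + ∏ i, q.2 i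

/-- The product of all coordinates but the one of index `e`: the `e`-th partial derivative of the
product of all coordinates. -/
noncomputable def prodErase (e : Fin n) (w : Fin n → ℂ) : ℂ := ∏ i ∈ Finset.univ.erase e, w i

theorem prod_eq_mul_prodErase (e : Fin n) (z : Fin n → ℂ) : ∏ i, z i = z e * prodErase e z :=
  (Finset.mul_prod_erase _ _ (Finset.mem_univ e)).symm

theorem prodErase_update (e : Fin n) (z : Fin n → ℂ) (s : ℂ) :
    prodErase e (Function.update z e s) = prodErase e z :=
  Finset.prod_congr rfl fun _ hi => Function.update_of_ne (Finset.ne_of_mem_erase hi) _ _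

theorem prod_update_eq_mul_prodErase (e : Fin n) (z : Fin n → ℂ) (s : ℂ) :
    ∏ i, Function.update z e s i = s * prodErase e z := by
  rw [prod_eq_mul_prodErase e, prodErase_update, Function.update_self]

theorem pow_le_norm_prodErase {e : Fin n} {w : Fin n → ℂ} {c : ℝ} (hc : 0 ≤ c) (hc1 : c ≤ 1)
    (h : ∀ i, i ≠ e → c ≤ ‖w i‖) : c ^ n ≤ ‖prodErase e w‖ := by
  rw [prodErase, norm_prod]
  calc c ^ n ≤ c ^ (Finset.univ.erase e).card :=
        pow_le_pow_of_le_one hc hc1 ((Finset.card_le_univ _).trans (by simp))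
    _ = ∏ _i ∈ Finset.univ.erase e, c := by rw [Finset.prod_const]
    _ ≤ ∏ i ∈ Finset.univ.erase e, ‖w i‖ :=
        Finset.prod_le_prod (fun _ _ => hc) fun i hi => h i (Finset.ne_of_mem_erase hi)

theorem norm_prodErase_le_pow {e : Fin n} {w : Fin n → ℂ} {c : ℝ} (hc1 : 1 ≤ c)
    (h : ∀ i, i ≠ e → ‖w i‖ ≤ c) : ‖prodErase e w‖ ≤ c ^ n := by
  rw [prodErase, norm_prod]
  calc ∏ i ∈ Finset.univ.erase e, ‖w i‖ ≤ ∏ _i ∈ Finset.univ.erase e, c :=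
        Finset.prod_le_prod (fun _ _ => norm_nonneg _) fun i hi => h i (Finset.ne_of_mem_erase hi)
    _ = c ^ (Finset.univ.erase e).card := by rw [Finset.prod_const]
    _ ≤ c ^ n := pow_le_pow_right₀ hc1 ((Finset.card_le_univ _).trans (by simp))

theorem analyticAt_prodModel (q : (Fin n → ℂ) × (Fin n → ℂ)) : AnalyticAt ℂ prodModel q := by
  refine AnalyticAt.add (Finset.analyticAt_fun_prod _ fun i _ => ?_)
    (Finset.analyticAt_fun_prod _ fun i _ => ?_)
  · exact ((ContinuousLinearMap.proj (R := ℂ) (φ := fun _ : Fin n => ℂ) i).comp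
      (ContinuousLinearMap.fst ℂ _ _)).analyticAt q
  · exact ((ContinuousLinearMap.proj (R := ℂ) (φ := fun _ : Fin n => ℂ) i).comp
      (ContinuousLinearMap.snd ℂ _ _)).analyticAt q

theorem prodModel_swap (q : (Fin n → ℂ) × (Fin n → ℂ)) : prodModel q.swap = prodModel q :=
  add_comm _ _

theorem norm_prodSwap {V W : Type*} [Norm V] [Norm W] (q : V × W) : ‖q.swap‖ = ‖q‖ :=
  max_comm _ _

theorem hasDerivAt_prodMk_update {G : (Fin n → ℂ) × (Fin n → ℂ) → ℂ} {e : Fin n}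
    {z w : Fin n → ℂ} {s : ℂ} (hG : DifferentiableAt ℂ G (z, Function.update w e s)) :
    HasDerivAt (fun s => G (z, Function.update w e s))
      (fderiv ℂ G (z, Function.update w e s) (0, Pi.single e 1)) s :=
  hG.hasFDerivAt.comp_hasDerivAt s ((hasDerivAt_const s z).prodMk (hasDerivAt_update w e s))

theorem fderiv_prodModel_single (e : Fin n) (q : (Fin n → ℂ) × (Fin n → ℂ)) :
    fderiv ℂ prodModel q (0, Pi.single e 1) = prodErase e q.2 := by
  obtain ⟨z, w⟩ := q
  have h_slice := hasDerivAt_prodMk_update (e := e) (z := z) (w := w) (s := w e)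
    (analyticAt_prodModel _).differentiableAt
  simp only [prodModel, prod_update_eq_mul_prodErase, Function.update_eq_self] at h_slice
  exact h_slice.unique
    (((hasDerivAt_mul_const (prodErase e w)).const_add (∏ i, z i)).congr_deriv rfl)

theorem norm_prodMk_le {z w : Fin n → ℂ} {R : ℝ} (hR : 0 ≤ R) (hz : ∀ i, ‖z i‖ ≤ R)
    (hw : ∀ i, ‖w i‖ ≤ R) : ‖(z, w)‖ ≤ R :=
  norm_prod_le_iff.2 ⟨(pi_norm_le_iff_of_nonneg hR).2 hz, (pi_norm_le_iff_of_nonneg hR).2 hw⟩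

theorem norm_prodMk_zero_single (e : Fin n) :
    ‖((0, Pi.single e 1) : (Fin n → ℂ) × (Fin n → ℂ))‖ = 1 := by
  rw [Prod.norm_mk, norm_zero, Pi.norm_single, norm_one, max_eq_right zero_le_one]

theorem analyticAt_update {V : Type*} [NormedAddCommGroup V] [NormedSpace ℂ V]
    {f : V → Fin n → ℂ} {g : V → ℂ} {x : V} (hf : AnalyticAt ℂ f x) (hg : AnalyticAt ℂ g x)
    (e : Fin n) : AnalyticAt ℂ (fun y => Function.update (f y) e (g y)) x := by
  refine AnalyticAt.pi fun i => ?_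
  rcases eq_or_ne i e with rfl | hi
  · simpa only [Function.update_self] using hg
  · simp only [Function.update_of_ne hi]
    exact ((ContinuousLinearMap.proj (R := ℂ) (φ := fun _ : Fin n => ℂ) i).analyticAt _).comp hf

end ProductModel

/-- The radius of the disc in which the distinguished coordinate of the first variable varies. -/
noncomputable def coordRadius (n : ℕ) : ℝ := 3 * 32 ^ n

/-- The radius of the ball on which the rescaled complexification is controlled. It leaves room
for the solution of `G = 0` in a coordinate, of modulus at most `32 ^ n * coordRadius n`. -/
noncomputable def controlRadius (n : ℕ) : ℝ := 32 ^ n * coordRadius n + 2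

/-- The admissible distance of the rescaled complexification from the product model. -/
noncomputable def perturbSize (n : ℕ) : ℝ := (1 / 100) ^ n

theorem one_le_pow_thirtyTwo (n : ℕ) : (1 : ℝ) ≤ 32 ^ n := one_le_pow₀ (by norm_num)

theorem three_le_coordRadius (n : ℕ) : 3 ≤ coordRadius n := by
  linarith [one_le_pow_thirtyTwo n, coordRadius.eq_1 n]

theorem coordRadius_le_controlRadius_sub (n : ℕ) : coordRadius n ≤ controlRadius n - 2 := by
  rw [controlRadius, add_sub_cancel_right]
  exact le_mul_of_one_le_left (by linarith [three_le_coordRadius n]) (one_le_pow_thirtyTwo n)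

theorem perturbSize_pos (n : ℕ) : 0 < perturbSize n := pow_pos (by norm_num) n

theorem perturbSize_mul_pow_le {n : ℕ} (hn : n ≠ 0) {c : ℝ} (hc : 0 ≤ c) (hc' : c ≤ 100) :
    perturbSize n * c ^ n ≤ c / 100 := by
  rw [perturbSize, ← mul_pow, one_div_mul_eq_div]
  exact pow_le_of_le_one (by positivity) (by linarith) hn

theorem perturbSize_le {n : ℕ} (hn : n ≠ 0) : perturbSize n ≤ 1 / 100 := by
  simpa using perturbSize_mul_pow_le hn zero_le_one (by norm_num)

/-- `G` is a holomorphic perturbation, of size at most `perturbSize n`, of the product model on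
the ball of radius `controlRadius n`. -/
structure NearModel {n : ℕ} (G : (Fin n → ℂ) × (Fin n → ℂ) → ℂ) : Prop where
  analyticAt : ∀ {q}, ‖q‖ ≤ controlRadius n → AnalyticAt ℂ G q
  norm_sub_le : ∀ {q}, ‖q‖ ≤ controlRadius n → ‖G q - prodModel q‖ ≤ perturbSize n

namespace NearModel

variable {n : ℕ} {G : (Fin n → ℂ) × (Fin n → ℂ) → ℂ}

theorem swap (hG : NearModel G) : NearModel (G ∘ Prod.swap) where
  analyticAt {q} hq := (hG.analyticAt (by rwa [norm_prodSwap])).comp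
    (f := Prod.swap) (analyticAt_snd.prod analyticAt_fst)
  norm_sub_le {q} hq := by
    simpa only [prodModel_swap, Function.comp_apply] using
      hG.norm_sub_le (q := q.swap) (by rwa [norm_prodSwap])

theorem norm_fderiv_sub_le (hG : NearModel G) {q v : (Fin n → ℂ) × (Fin n → ℂ)}
    (hq : ‖q‖ ≤ controlRadius n - 1) (hv : ‖v‖ ≤ 1) :
    ‖fderiv ℂ G q v - fderiv ℂ prodModel q v‖ ≤ perturbSize n := by
  have h_mem : ∀ t : ℂ, ‖t‖ ≤ 1 → ‖q + t • v‖ ≤ controlRadius n := fun t ht => by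
    have := mul_le_mul ht hv (norm_nonneg _) zero_le_one
    linarith [norm_add_le q (t • v), norm_smul t v]
  have h_deriv : ∀ t : ℂ, ‖t‖ ≤ 1 → HasDerivAt (fun t => G (q + t • v) - prodModel (q + t • v))
      (fderiv ℂ G (q + t • v) v - fderiv ℂ prodModel (q + t • v) v) t := by
    intro t ht
    have h_line : HasDerivAt (fun t : ℂ => q + t • v) v t := by
      simpa using ((hasDerivAt_id t).smul_const v).const_add q
    exact ((hG.analyticAt (h_mem t ht)).differentiableAt.hasFDerivAt.comp_hasDerivAt t h_line).sub
      ((analyticAt_prodModel _).differentiableAt.hasFDerivAt.comp_hasDerivAt t h_line)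
  have h_cauchy := Complex.norm_deriv_le_of_forall_mem_sphere_norm_le (c := 0) one_pos
    (DifferentiableOn.diffContOnCl fun t ht => by
      rw [closure_ball _ one_ne_zero, mem_closedBall_zero_iff] at ht
      exact (h_deriv t ht).differentiableAt.differentiableWithinAt)
    fun t ht => hG.norm_sub_le (h_mem t (mem_sphere_zero_iff_norm.1 ht).le)
  rw [(h_deriv 0 (by simp)).deriv] at h_cauchy
  simpa using h_cauchy

end NearModel

/-! ### Solving `G = 0` for one coordinate -/

section SlabAndAnnularSet

variable {n : ℕ} {e : Fin n} {X : ℝ}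

/-- Points all of whose coordinates of index `≠ e` have modulus `< 2`, the one of index `e`
having modulus `< X`. -/
def slab (e : Fin n) (X : ℝ) : Set (Fin n → ℂ) :=
  {z | (∀ i, i ≠ e → ‖z i‖ < 2) ∧ ‖z e‖ < X}

/-- Points whose coordinates of index `≠ e` lie in the annulus `1/8 < |x| < 2`. The coordinate of
index `e` is free: it is the one for which `G = 0` is solved. -/
def annularSet (e : Fin n) : Set (Fin n → ℂ) :=
  {w | ∀ i, i ≠ e → 1 / 8 < ‖w i‖ ∧ ‖w i‖ < 2}

theorem isOpen_forall_ne_mem {ι X : Type*} [Finite ι] [TopologicalSpace X] (e : ι) {u : Set X}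
    (hu : IsOpen u) : IsOpen {z : ι → X | ∀ i, i ≠ e → z i ∈ u} :=
  isOpen_set_pi (i := {e}ᶜ) (s := fun _ => u) (Set.toFinite _) fun _ _ => hu

theorem isOpen_annulus (r R : ℝ) : IsOpen {x : ℂ | r < ‖x‖ ∧ ‖x‖ < R} :=
  (isOpen_lt continuous_const continuous_norm).inter (isOpen_lt continuous_norm continuous_const)

theorem isOpen_slab (e : Fin n) (X : ℝ) : IsOpen (slab e X) :=
  (isOpen_forall_ne_mem e (u := {x : ℂ | ‖x‖ < 2})
    (isOpen_lt continuous_norm continuous_const)).inter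
    (isOpen_lt (continuous_apply e).norm continuous_const)

theorem isOpen_annularSet (e : Fin n) : IsOpen (annularSet e) :=
  isOpen_forall_ne_mem e (isOpen_annulus (1 / 8) 2)

theorem update_mem_annularSet_iff {w : Fin n → ℂ} {s : ℂ} :
    Function.update w e s ∈ annularSet e ↔ w ∈ annularSet e :=
  forall₂_congr fun i hi => by rw [Function.update_of_ne hi]

theorem norm_prodMk_update_le (hX : X ≤ coordRadius n) {z w : Fin n → ℂ} (hz : z ∈ slab e X)
    (hw : w ∈ annularSet e) {s : ℂ} (hs : ‖s‖ ≤ 32 ^ n * X) :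
    ‖(z, Function.update w e s)‖ ≤ controlRadius n - 1 := by
  have h_three := three_le_coordRadius n
  have h_control := coordRadius_le_controlRadius_sub n
  have h_mul : 32 ^ n * X ≤ controlRadius n - 2 := by
    rw [controlRadius, add_sub_cancel_right]
    gcongr
  refine norm_prodMk_le (by linarith) (fun i => ?_) fun i => ?_
  · rcases eq_or_ne i e with rfl | hi
    · linarith [hz.2]
    · linarith [hz.1 i hi]
  · rcases eq_or_ne i e with rfl | hi
    · rw [Function.update_self]
      linarith
    · rw [Function.update_of_ne hi]
      linarith [(hw i hi).2]

theorem one_le_norm_prodErase_mul_pow {w : Fin n → ℂ} (hw : w ∈ annularSet e) :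
    1 ≤ ‖prodErase e w‖ * 8 ^ n := by
  calc (1 : ℝ) = (1 / 8) ^ n * 8 ^ n := by rw [← mul_pow]; norm_num
    _ ≤ ‖prodErase e w‖ * 8 ^ n := by
      gcongr
      exact pow_le_norm_prodErase (by norm_num) (by norm_num) fun i hi => (hw i hi).1.le

theorem norm_prodErase_pos {w : Fin n → ℂ} (hw : w ∈ annularSet e) : 0 < ‖prodErase e w‖ :=
  pos_of_mul_pos_left (one_pos.trans_le (one_le_norm_prodErase_mul_pow hw)) (by positivity)

theorem perturbSize_le_half_norm_prodErase {w : Fin n → ℂ} (hw : w ∈ annularSet e) :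
    perturbSize n ≤ ‖prodErase e w‖ / 2 := by
  have h_one := one_le_norm_prodErase_mul_pow hw
  have h_small := perturbSize_mul_pow_le e.pos.ne' (c := 8) (by norm_num) (by norm_num)
  refine le_of_mul_le_mul_right ?_ (show (0 : ℝ) < 8 ^ n by positivity)
  linarith

end SlabAndAnnularSet

section Newton

variable {n : ℕ} {G : (Fin n → ℂ) × (Fin n → ℂ) → ℂ} {e : Fin n} {X : ℝ} {z w : Fin n → ℂ}
  {s t : ℂ}

theorem NearModel.fderiv_single_ne_zero (hG : NearModel G) {q : (Fin n → ℂ) × (Fin n → ℂ)}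
    (hq : ‖q‖ ≤ controlRadius n - 1) (hw : q.2 ∈ annularSet e) :
    fderiv ℂ G q (0, Pi.single e 1) ≠ 0 := by
  intro h0
  have h_near := hG.norm_fderiv_sub_le hq (norm_prodMk_zero_single e).le
  rw [h0, fderiv_prodModel_single, zero_sub, norm_neg] at h_near
  linarith [perturbSize_le_half_norm_prodErase hw, norm_prodErase_pos hw]

/-- The simplified Newton iteration for the equation `G (z, w with w_e = s) = 0` in `s`, with the
derivative of `G` replaced by that of the product model. -/
noncomputable def newtonMap (G : (Fin n → ℂ) × (Fin n → ℂ) → ℂ) (e : Fin n)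
    (z w : Fin n → ℂ) (s : ℂ) : ℂ :=
  s - G (z, Function.update w e s) / prodErase e w

theorem newtonMap_eq_self_iff (hw : w ∈ annularSet e) :
    newtonMap G e z w s = s ↔ G (z, Function.update w e s) = 0 := by
  simp [newtonMap, sub_eq_self, norm_pos_iff.1 (norm_prodErase_pos hw)]

theorem newtonMap_mul_prodErase (hw : w ∈ annularSet e) :
    newtonMap G e z w s * prodErase e w =
      -(z e * prodErase e z +
        (G (z, Function.update w e s) - prodModel (z, Function.update w e s))) := by
  have h_ne : prodErase e w ≠ 0 := norm_pos_iff.1 (norm_prodErase_pos hw)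
  rw [newtonMap, prodModel, prod_update_eq_mul_prodErase, prod_eq_mul_prodErase e z, sub_mul,
    div_mul_cancel₀ _ h_ne]
  ring

theorem NearModel.norm_newtonMap_lt (hG : NearModel G) (hX1 : 1 ≤ X) (hX : X ≤ coordRadius n)
    (hz : z ∈ slab e X) (hw : w ∈ annularSet e) (hs : ‖s‖ ≤ 32 ^ n * X) :
    ‖newtonMap G e z w s‖ < 32 ^ n * X := by
  have hn : n ≠ 0 := e.pos.ne'
  have h_mem := norm_prodMk_update_le hX hz hw hs
  have h_near := hG.norm_sub_le (h_mem.trans (sub_le_self _ one_pos.le))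
  have hz_prod : ‖prodErase e z‖ ≤ 2 ^ n :=
    norm_prodErase_le_pow (by norm_num) fun i hi => (hz.1 i hi).le
  have h_two : (2 : ℝ) ≤ 2 ^ n := le_self_pow₀ one_le_two hn
  refine lt_of_mul_lt_mul_right ?_ (norm_nonneg (prodErase e w))
  calc ‖newtonMap G e z w s‖ * ‖prodErase e w‖
      ≤ ‖z e‖ * ‖prodErase e z‖ + perturbSize n := by
        rw [← norm_mul, newtonMap_mul_prodErase hw, norm_neg, ← norm_mul]
        exact (norm_add_le _ _).trans (add_le_add_right h_near _)
    _ ≤ X * 2 ^ n + perturbSize n := by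
        gcongr
        exact hz.2.le
    _ < X * 2 ^ n * 2 ^ n := by
        nlinarith [perturbSize_le hn, mul_le_mul hX1 h_two zero_le_two (by linarith)]
    _ ≤ X * 2 ^ n * 2 ^ n * (‖prodErase e w‖ * 8 ^ n) :=
        le_mul_of_one_le_right (by positivity) (one_le_norm_prodErase_mul_pow hw)
    _ = 32 ^ n * X * ‖prodErase e w‖ := by
        rw [show (32 : ℝ) = 2 * 2 * 8 by norm_num, mul_pow, mul_pow]
        ring

theorem NearModel.norm_newtonMap_sub_le (hG : NearModel G) (hX : X ≤ coordRadius n)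
    (hz : z ∈ slab e X) (hw : w ∈ annularSet e) (hs : ‖s‖ ≤ 32 ^ n * X) (ht : ‖t‖ ≤ 32 ^ n * X) :
    ‖newtonMap G e z w s - newtonMap G e z w t‖ ≤ 1 / 2 * ‖s - t‖ := by
  let G' : ℂ → ℂ := fun x => fderiv ℂ G (z, Function.update w e x) (0, Pi.single e 1)
  have h_ne : prodErase e w ≠ 0 := norm_pos_iff.1 (norm_prodErase_pos hw)
  have h_deriv : ∀ x ∈ Metric.closedBall (0 : ℂ) (32 ^ n * X),
      HasDerivAt (newtonMap G e z w) (1 - G' x / prodErase e w) x := fun x hx => by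
    have h_mem := norm_prodMk_update_le hX hz hw (mem_closedBall_zero_iff.1 hx)
    exact (hasDerivAt_id x).sub ((hasDerivAt_prodMk_update
      (hG.analyticAt (by linarith)).differentiableAt).div_const _)
  refine Convex.norm_image_sub_le_of_norm_hasDerivWithin_le
    (fun x hx => (h_deriv x hx).hasDerivWithinAt) (fun x hx => ?_)
    (convex_closedBall 0 (32 ^ n * X)) (by simpa using ht) (by simpa using hs)
  have h_near : ‖G' x - prodErase e w‖ ≤ perturbSize n := by
    simpa only [fderiv_prodModel_single, prodErase_update] using
      hG.norm_fderiv_sub_le (norm_prodMk_update_le hX hz hw (mem_closedBall_zero_iff.1 hx))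
        (norm_prodMk_zero_single e).le
  rw [one_sub_div h_ne, norm_div, div_le_iff₀ (norm_prodErase_pos hw), norm_sub_rev]
  linarith [perturbSize_le_half_norm_prodErase hw]

theorem NearModel.exists_update_eq_zero (hG : NearModel G) (hX1 : 1 ≤ X) (hX : X ≤ coordRadius n)
    (hz : z ∈ slab e X) (hw : w ∈ annularSet e) :
    ∃ s : ℂ, ‖s‖ < 32 ^ n * X ∧ G (z, Function.update w e s) = 0 := by
  have h_maps : Set.MapsTo (newtonMap G e z w) (Metric.closedBall 0 (32 ^ n * X))
      (Metric.closedBall 0 (32 ^ n * X)) := fun s hs => by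
    rw [mem_closedBall_zero_iff] at *
    exact (hG.norm_newtonMap_lt hX1 hX hz hw hs).le
  have h_contr : ContractingWith (1 / 2) (h_maps.restrict (newtonMap G e z w) _ _) := by
    refine ⟨by norm_num [← NNReal.coe_lt_coe], LipschitzWith.of_dist_le_mul ?_⟩
    rintro ⟨s, hs⟩ ⟨t, ht⟩
    rw [mem_closedBall_zero_iff] at hs ht
    simpa [Subtype.dist_eq, dist_eq_norm] using hG.norm_newtonMap_sub_le hX hz hw hs ht
  obtain ⟨s, hs, h_fixed, -⟩ := h_contr.exists_fixedPoint'
    Metric.isClosed_closedBall.isComplete h_maps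
    (Metric.mem_closedBall_self (by positivity)) (edist_ne_top _ _)
  refine ⟨s, ?_, (newtonMap_eq_self_iff hw).1 h_fixed⟩
  simpa only [h_fixed.eq] using
    hG.norm_newtonMap_lt hX1 hX hz hw (mem_closedBall_zero_iff.1 hs)

theorem NearModel.eq_of_update_eq_zero (hG : NearModel G) (hX : X ≤ coordRadius n)
    (hz : z ∈ slab e X) (hw : w ∈ annularSet e) (hs : ‖s‖ ≤ 32 ^ n * X) (ht : ‖t‖ ≤ 32 ^ n * X)
    (hs0 : G (z, Function.update w e s) = 0) (ht0 : G (z, Function.update w e t) = 0) : s = t := by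
  have h_contr := hG.norm_newtonMap_sub_le hX hz hw hs ht
  rw [(newtonMap_eq_self_iff hw).2 hs0, (newtonMap_eq_self_iff hw).2 ht0] at h_contr
  exact sub_eq_zero.1 (norm_eq_zero.1 (by linarith [norm_nonneg (s - t)]))

end Newton

/-- Over `slab e X ×ˢ annularSet e` the equation `G = 0` is solved, for the `e`-th coordinate of
the second variable in the disc of radius `32 ^ n * X`, by the holomorphic function `γ`. The value
`γ (z, w)` does not depend on `w e`. -/
structure SolvesCoord {n : ℕ} (G : (Fin n → ℂ) × (Fin n → ℂ) → ℂ) (e : Fin n) (X : ℝ)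
    (γ : (Fin n → ℂ) × (Fin n → ℂ) → ℂ) : Prop where
  norm_lt : ∀ {z w}, z ∈ slab e X → w ∈ annularSet e → ‖γ (z, w)‖ < 32 ^ n * X
  analyticAt : ∀ {z w}, z ∈ slab e X → w ∈ annularSet e → AnalyticAt ℂ γ (z, w)
  eq_zero_iff : ∀ {z w}, z ∈ slab e X → w ∈ annularSet e → ∀ {s : ℂ}, ‖s‖ ≤ 32 ^ n * X →
    (G (z, Function.update w e s) = 0 ↔ s = γ (z, w))

/-- The point over `q` of the hypersurface obtained by solving for the `e`-th coordinate of the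
second variable by `γ`. -/
def coordGraph {n : ℕ} (e : Fin n) (γ : (Fin n → ℂ) × (Fin n → ℂ) → ℂ)
    (q : (Fin n → ℂ) × (Fin n → ℂ)) : (Fin n → ℂ) × (Fin n → ℂ) :=
  (q.1, Function.update q.2 e (γ q))

namespace SolvesCoord

variable {n : ℕ} {G : (Fin n → ℂ) × (Fin n → ℂ) → ℂ} {e : Fin n} {X : ℝ}
  {γ : (Fin n → ℂ) × (Fin n → ℂ) → ℂ} {z w : Fin n → ℂ}

theorem apply_coordGraph (hγ : SolvesCoord G e X γ) (hz : z ∈ slab e X)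
    (hw : w ∈ annularSet e) : G (coordGraph e γ (z, w)) = 0 :=
  (hγ.eq_zero_iff hz hw (hγ.norm_lt hz hw).le).2 rfl

theorem norm_coordGraph_le (hγ : SolvesCoord G e X γ) (hX : X ≤ coordRadius n)
    (hz : z ∈ slab e X) (hw : w ∈ annularSet e) :
    ‖coordGraph e γ (z, w)‖ ≤ controlRadius n - 1 :=
  norm_prodMk_update_le hX hz hw (hγ.norm_lt hz hw).le

theorem analyticAt_coordGraph (hγ : SolvesCoord G e X γ) (hz : z ∈ slab e X)
    (hw : w ∈ annularSet e) : AnalyticAt ℂ (coordGraph e γ) (z, w) :=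
  analyticAt_fst.prod (analyticAt_update analyticAt_snd (hγ.analyticAt hz hw) e)

end SolvesCoord

section ImplicitFunction

theorem analyticAt_of_eventually_eq_zero_iff {V : Type*} [NormedAddCommGroup V]
    [NormedSpace ℂ V] [CompleteSpace V] {g : V × ℂ → ℂ} {γ : V → ℂ} {q : V} {R : ℝ}
    (hg : AnalyticAt ℂ g (q, γ q)) (hg' : fderiv ℂ g (q, γ q) (0, 1) ≠ 0) (hR : ‖γ q‖ < R)
    (h_iff : ∀ᶠ x in 𝓝 q, ∀ s : ℂ, ‖s‖ ≤ R → (g (x, s) = 0 ↔ s = γ x)) : AnalyticAt ℂ γ q := by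
  have h_smooth : ContDiffAt ℂ ⊤ g (q, γ q) := hg.contDiffAt
  have h_inv : (fderiv ℂ g (q, γ q) ∘L ContinuousLinearMap.inr ℂ V ℂ).IsInvertible :=
    ⟨ContinuousLinearEquiv.unitsEquivAut ℂ (Units.mk0 _ hg'), by ext; simp⟩
  let ψ := h_smooth.implicitFunction (by simp) h_inv
  have hψ : AnalyticAt ℂ ψ q := (h_smooth.contDiffAt_implicitFunction (by simp) h_inv).analyticAt
  have hψq : ψ q = γ q := h_smooth.implicitFunction_apply_self (by simp) h_inv
  refine hψ.congr ?_
  have hψ_norm : ∀ᶠ x in 𝓝 q, ‖ψ x‖ < R :=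
    hψ.continuousAt.norm.eventually_lt_const (by simpa only [hψq] using hR)
  filter_upwards [h_smooth.eventually_apply_implicitFunction (by simp) h_inv, hψ_norm, h_iff] with
    x h_eq h_norm h_iff_x
  exact (h_iff_x _ h_norm.le).1 (h_eq.trans ((h_iff.self_of_nhds _ hR.le).2 rfl))

variable {n : ℕ} {G : (Fin n → ℂ) × (Fin n → ℂ) → ℂ} {X : ℝ}

theorem NearModel.exists_solvesCoord (hG : NearModel G) (e : Fin n) (hX1 : 1 ≤ X)
    (hX : X ≤ coordRadius n) : ∃ γ, SolvesCoord G e X γ := by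
  choose! γ hγ_lt hγ_zero using fun (q : (Fin n → ℂ) × (Fin n → ℂ))
    (hq : q ∈ slab e X ×ˢ annularSet e) => hG.exists_update_eq_zero hX1 hX hq.1 hq.2
  have h_iff : ∀ q ∈ slab e X ×ˢ annularSet e, ∀ s : ℂ, ‖s‖ ≤ 32 ^ n * X →
      (G (q.1, Function.update q.2 e s) = 0 ↔ s = γ q) := fun q hq s hs =>
    ⟨fun h => hG.eq_of_update_eq_zero hX hq.1 hq.2 hs (hγ_lt q hq).le h (hγ_zero q hq),
      fun h => h ▸ hγ_zero q hq⟩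
  refine ⟨γ, fun hz hw => hγ_lt _ ⟨hz, hw⟩, fun {z w} hz hw => ?_,
    fun hz hw => h_iff (_, _) ⟨hz, hw⟩ _⟩
  have h_mem := norm_prodMk_update_le hX hz hw (hγ_lt (z, w) ⟨hz, hw⟩).le
  have hG_at := hG.analyticAt (h_mem.trans (sub_le_self _ one_pos.le))
  let g : ((Fin n → ℂ) × (Fin n → ℂ)) × ℂ → ℂ := fun x => G (x.1.1, Function.update x.1.2 e x.2)
  have hg : AnalyticAt ℂ g ((z, w), γ (z, w)) :=
    AnalyticAt.comp (f := fun x : ((Fin n → ℂ) × (Fin n → ℂ)) × ℂ =>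
      (x.1.1, Function.update x.1.2 e x.2)) hG_at ((analyticAt_fst.comp analyticAt_fst).prod
      (analyticAt_update (analyticAt_snd.comp analyticAt_fst) analyticAt_snd e))
  have hg' : fderiv ℂ g ((z, w), γ (z, w)) (0, 1) =
      fderiv ℂ G (z, Function.update w e (γ (z, w))) (0, Pi.single e 1) :=
    (hg.differentiableAt.hasFDerivAt.comp_hasDerivAt _
      ((hasDerivAt_const _ (z, w)).prodMk (hasDerivAt_id _))).unique
      (hasDerivAt_prodMk_update hG_at.differentiableAt)
  refine analyticAt_of_eventually_eq_zero_iff hg ?_ (hγ_lt (z, w) ⟨hz, hw⟩) ?_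
  · rw [hg']
    exact hG.fderiv_single_ne_zero h_mem (update_mem_annularSet_iff.2 hw)
  · filter_upwards [((isOpen_slab e X).prod (isOpen_annularSet e)).mem_nhds ⟨hz, hw⟩] with x hx
    exact h_iff x hx

end ImplicitFunction

/-! ### Propagation of the Levi condition -/

section LeviForm

variable {V W E : Type*} [NormedAddCommGroup V] [NormedSpace ℂ V] [NormedAddCommGroup W]
  [NormedSpace ℂ W] [NormedAddCommGroup E] [NormedSpace ℂ E]

theorem analyticAt_clm_apply {f : V → W →L[ℂ] E} {g : V → W} {x : V} (hf : AnalyticAt ℂ f x)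
    (hg : AnalyticAt ℂ g x) : AnalyticAt ℂ (fun y => f y (g y)) x :=
  AnalyticAt.comp (f := fun y => (f y, g y))
    ((ContinuousLinearMap.id ℂ (W →L[ℂ] E)).analyticAt_bilinear (f x, g x)) (hf.prod hg)

theorem fderiv_comp_swap {G : V × W → E} {q : W × V} (hG : DifferentiableAt ℂ G q.swap)
    (v : W × V) : fderiv ℂ (G ∘ Prod.swap) q v = fderiv ℂ G q.swap v.swap := by
  have h_swap : HasFDerivAt Prod.swap
      ((ContinuousLinearMap.snd ℂ W V).prod (ContinuousLinearMap.fst ℂ W V)) q :=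
    hasFDerivAt_snd.prodMk hasFDerivAt_fst
  rw [(hG.hasFDerivAt.comp q h_swap).fderiv]
  rfl

theorem map_smul_sub_smul_prodMk_zero (D : V × W →L[ℂ] ℂ) (c c' : ℂ) (v v' : V) :
    D (c • v - c' • v', 0) = c * D (v, 0) - c' * D (v', 0) := by
  simp_rw [← smul_eq_mul, ← map_smul, ← map_sub]
  simp

theorem map_prodMk_zero_smul_sub_smul (D : V × W →L[ℂ] ℂ) (c c' : ℂ) (w w' : W) :
    D (0, c • w - c' • w') = c * D (0, w) - c' * D (0, w') := by
  simp_rw [← smul_eq_mul, ← map_smul, ← map_sub]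
  simp

variable {G : V × W → ℂ} {q : V × W} {a v : V} {b u : W}

/-- The mixed second derivative of `G` at `v`, `u` after projecting them along `a`, `b` to the
kernels of the partial differentials. Denominators are cleared, so that the expression is
holomorphic in `q`. -/
noncomputable def projectedLevi (G : V × W → ℂ) (a : V) (b : W) (v : V) (u : W) (q : V × W) : ℂ :=
  fderiv ℂ (fderiv ℂ G) q
    (0, fderiv ℂ G q (0, b) • u - fderiv ℂ G q (0, u) • b)
    (fderiv ℂ G q (a, 0) • v - fderiv ℂ G q (v, 0) • a, 0)

theorem analyticAt_projectedLevi (hG : AnalyticAt ℂ G q) :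
    AnalyticAt ℂ (projectedLevi G a b v u) q := by
  have h_apply : ∀ x, AnalyticAt ℂ (fun q => fderiv ℂ G q x) q := fun x =>
    analyticAt_clm_apply hG.fderiv analyticAt_const
  refine analyticAt_clm_apply (analyticAt_clm_apply hG.fderiv.fderiv
    (analyticAt_const.prod ?_)) (AnalyticAt.prod ?_ analyticAt_const) <;>
  exact ((h_apply _).smul analyticAt_const).sub ((h_apply _).smul analyticAt_const)

theorem LeviAt.projectedLevi_eq_zero (h : LeviAt G q) : projectedLevi G a b v u q = 0 := by
  refine h _ _ ?_ ?_
  · rw [map_smul_sub_smul_prodMk_zero, mul_comm, sub_self]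
  · rw [map_prodMk_zero_smul_sub_smul, mul_comm, sub_self]

theorem leviAt_of_projectedLevi_eq_zero (ha : fderiv ℂ G q (a, 0) ≠ 0)
    (hb : fderiv ℂ G q (0, b) ≠ 0) (h : ∀ v u, projectedLevi G a b v u q = 0) : LeviAt G q := by
  intro v u hv hu
  have h_levi := h v u
  rw [projectedLevi, hv, hu, zero_smul, zero_smul, sub_zero, sub_zero, map_smul_prodMk_zero,
    map_prodMk_zero_smul] at h_levi
  simpa [ha, hb] using h_levi

end LeviForm

section AnnularBox

variable {n : ℕ} {e : Fin n} {p : Fin n → ℂ} {s : ℂ}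

/-- The part of `annularSet e` where the `e`-th coordinate has modulus `< coordRadius n`. -/
def annularBox (e : Fin n) : Set (Fin n → ℂ) := {z | z ∈ annularSet e ∧ ‖z e‖ < coordRadius n}

theorem isOpen_annularBox (e : Fin n) : IsOpen (annularBox e) :=
  (isOpen_annularSet e).inter (isOpen_lt (continuous_apply e).norm continuous_const)

theorem annularBox_subset_slab (e : Fin n) : annularBox e ⊆ slab e (coordRadius n) :=
  fun _ hz => ⟨fun i hi => (hz.1 i hi).2, hz.2⟩

theorem isPreconnected_annulus {r R : ℝ} (hr : 0 < r) (hR : 0 < R) :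
    IsPreconnected {x : ℂ | r < ‖x‖ ∧ ‖x‖ < R} := by
  have h_exp : {x : ℂ | r < ‖x‖ ∧ ‖x‖ < R} =
      Complex.exp '' (Complex.reLm ⁻¹' Set.Ioo (Real.log r) (Real.log R)) := by
    ext x
    constructor
    · rintro ⟨h_lower, h_upper⟩
      have hx : 0 < ‖x‖ := hr.trans h_lower
      refine ⟨Complex.log x, ⟨?_, ?_⟩, Complex.exp_log (norm_pos_iff.1 hx)⟩
      · simpa [Complex.log_re] using Real.log_lt_log hr h_lower
      · simpa [Complex.log_re] using Real.log_lt_log hx h_upper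
    · rintro ⟨y, ⟨h_lower, h_upper⟩, rfl⟩
      rw [Set.mem_ofPred_eq, Complex.norm_exp]
      exact ⟨(Real.log_lt_iff_lt_exp hr).1 h_lower, (Real.lt_log_iff_exp_lt hR).1 h_upper⟩
  rw [h_exp]
  exact ((convex_Ioo _ _).linear_preimage Complex.reLm).isPreconnected.image _
    Complex.continuous_exp.continuousOn

theorem annularBox_eq_pi (e : Fin n) : annularBox e = Set.pi Set.univ fun i =>
    if i = e then Metric.ball (0 : ℂ) (coordRadius n) else {x : ℂ | 1 / 8 < ‖x‖ ∧ ‖x‖ < 2} := by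
  ext z
  simp only [Set.mem_univ_pi]
  refine ⟨fun hz i => ?_, fun hz => ⟨fun i hi => by simpa [hi] using hz i, by simpa using hz e⟩⟩
  split_ifs with hi
  · simpa [hi] using hz.2
  · exact hz.1 i hi

theorem isPreconnected_annularBox (e : Fin n) : IsPreconnected (annularBox e) := by
  rw [annularBox_eq_pi]
  refine isPreconnected_univ_pi fun i => ?_
  split_ifs
  · exact (convex_ball _ _).isPreconnected
  · exact isPreconnected_annulus (by norm_num) (by norm_num)

theorem star_update (e : Fin n) (p : Fin n → ℂ) (s : ℂ) :
    star (Function.update p e s) = Function.update (star p) e (star s) := by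
  ext i
  rcases eq_or_ne i e with rfl | hi <;> simp [*]

theorem star_mem_annularSet (hp : p ∈ annularSet e) : star p ∈ annularSet e := fun i hi => by
  simpa using hp i hi

theorem update_mem_annularBox (hp : p ∈ annularSet e) (hs : ‖s‖ < coordRadius n) :
    Function.update p e s ∈ annularBox e :=
  ⟨update_mem_annularSet_iff.2 hp, by simpa using hs⟩

theorem norm_le_coordRadius (hp : p ∈ annularBox e) : ‖p‖ ≤ coordRadius n := by
  have h_three := three_le_coordRadius n
  refine (pi_norm_le_iff_of_nonneg (by linarith)).2 fun i => ?_
  rcases eq_or_ne i e with rfl | hi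
  · exact hp.2.le
  · linarith [(hp.1 i hi).2]

theorem ball_half_subset_annularBox (e : Fin n) :
    Metric.ball (fun _ => (1 / 2 : ℂ)) (1 / 4) ⊆ annularBox e := by
  intro z hz
  have h_bounds : ∀ i, 1 / 8 < ‖z i‖ ∧ ‖z i‖ < 2 := fun i => by
    have h_close := (norm_le_pi_norm (z - fun _ => (1 / 2 : ℂ)) i).trans_lt
      (mem_ball_iff_norm.1 hz)
    have h_half : ‖(1 / 2 : ℂ)‖ = 1 / 2 := by norm_num
    have := abs_le.1 (abs_norm_sub_norm_le (z i) (1 / 2))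
    rw [Pi.sub_apply] at h_close
    constructor <;> linarith
  exact ⟨fun i _ => h_bounds i, by linarith [(h_bounds e).2, three_le_coordRadius n]⟩

end AnnularBox

theorem NearModel.fderiv_single_zero_ne_zero {n : ℕ} {G : (Fin n → ℂ) × (Fin n → ℂ) → ℂ}
    (hG : NearModel G) {e : Fin n} {q : (Fin n → ℂ) × (Fin n → ℂ)}
    (hq : ‖q‖ ≤ controlRadius n - 1) (hz : q.1 ∈ annularSet e) :
    fderiv ℂ G q (Pi.single e 1, 0) ≠ 0 := by
  have h_swap := hG.swap.fderiv_single_ne_zero (q := q.swap) (by rwa [norm_prodSwap]) hz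
  have h_diff : DifferentiableAt ℂ G q.swap.swap :=
    (hG.analyticAt (hq.trans (sub_le_self _ one_pos.le))).differentiableAt
  rwa [fderiv_comp_swap h_diff] at h_swap

/-- `G` is real-valued on the conjugate diagonal, and its zero set satisfies the Levi condition
there, for points of norm at most `R`. This is what a complexified Levi-flat equation satisfies. -/
structure LeviFlatOnConjDiag {n : ℕ} (G : (Fin n → ℂ) × (Fin n → ℂ) → ℂ) (R : ℝ) : Prop where
  im_eq_zero : ∀ {p}, ‖p‖ ≤ R → (G (p, star p)).im = 0
  leviAt : ∀ {p}, ‖p‖ ≤ R → G (p, star p) = 0 → fderiv ℂ G (p, star p) ≠ 0 → LeviAt G (p, star p)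

section RealPoints

variable {n : ℕ} {G : (Fin n → ℂ) × (Fin n → ℂ) → ℂ} {e : Fin n} {p : Fin n → ℂ}

theorem prodModel_prodMk_star (p : Fin n → ℂ) :
    prodModel (p, star p) = ((2 * (∏ i, p i).re : ℝ) : ℂ) := by
  have h_star : ∏ i, star p i = star (∏ i, p i) := (map_prod (starRingEnd ℂ) p _).symm
  rw [prodModel, h_star, RCLike.star_def, Complex.add_conj]

theorem two_mul_pow_eight_lt_coordRadius (n : ℕ) : (2 : ℝ) * 8 ^ n < coordRadius n := by
  have h_le : (8 : ℝ) ^ n ≤ 32 ^ n := pow_le_pow_left₀ (by norm_num) (by norm_num) n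
  linarith [one_le_pow_thirtyTwo n, coordRadius.eq_1 n]

theorem NearModel.abs_re_sub_le (hG : NearModel G) (hp : ‖p‖ ≤ controlRadius n) :
    |(G (p, star p)).re - 2 * (∏ i, p i).re| ≤ perturbSize n := by
  have h_near := hG.norm_sub_le (q := (p, star p)) (by simpa [Prod.norm_mk] using hp)
  rw [prodModel_prodMk_star] at h_near
  simpa using (Complex.abs_re_le_norm _).trans h_near

theorem norm_add_mul_I_div_prodErase_le (hp : p ∈ annularSet e) {x y : ℝ} (hx : |x| ≤ 1)
    (hy : |y| ≤ 1) : ‖((x : ℂ) + y * Complex.I) / prodErase e p‖ ≤ 2 * 8 ^ n := by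
  have h_num : ‖(x : ℂ) + y * Complex.I‖ ≤ 2 := by
    have := Complex.norm_le_abs_re_add_abs_im ((x : ℂ) + y * Complex.I)
    simp only [Complex.add_re, Complex.ofReal_re, Complex.re_ofReal_mul, Complex.I_re, mul_zero,
      add_zero, Complex.add_im, Complex.ofReal_im, Complex.im_ofReal_mul, Complex.I_im, mul_one,
      zero_add] at this
    linarith
  rw [norm_div, div_le_iff₀ (norm_prodErase_pos hp)]
  nlinarith [one_le_norm_prodErase_mul_pow hp]

theorem NearModel.exists_conjDiag_zero (hG : NearModel G)
    (hL : LeviFlatOnConjDiag G (controlRadius n)) (hp : p ∈ annularSet e) {y : ℝ} (hy : |y| ≤ 1) :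
    ∃ s : ℂ, ‖s‖ ≤ 2 * 8 ^ n ∧ (s * prodErase e p).im = y ∧
      G (Function.update p e s, star (Function.update p e s)) = 0 := by
  -- Along the line on which `Im (p₁⋯pₙ) = y`, the real function `G (p, p̄)` is close to
  -- `2 Re (p₁⋯pₙ)`, hence changes sign.
  let σ : ℝ → ℂ := fun x => ((x : ℂ) + y * Complex.I) / prodErase e p
  let φ : ℝ → ℂ := fun x => G (Function.update p e (σ x), star (Function.update p e (σ x)))
  have h_ne : prodErase e p ≠ 0 := norm_pos_iff.1 (norm_prodErase_pos hp)
  have hσ_mul : ∀ x, σ x * prodErase e p = (x : ℂ) + y * Complex.I := fun x =>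
    div_mul_cancel₀ _ h_ne
  have hσ_norm : ∀ x ∈ Set.Icc (-1 : ℝ) 1, ‖σ x‖ ≤ 2 * 8 ^ n := fun x hx =>
    norm_add_mul_I_div_prodErase_le hp (abs_le.2 hx) hy
  have h_norm : ∀ x ∈ Set.Icc (-1 : ℝ) 1, ‖Function.update p e (σ x)‖ ≤ controlRadius n :=
    fun x hx => by
      have := norm_le_coordRadius (update_mem_annularBox hp
        ((hσ_norm x hx).trans_lt (two_mul_pow_eight_lt_coordRadius n)))
      linarith [coordRadius_le_controlRadius_sub n]
  have hφ_cont : ContinuousOn (fun x => (φ x).re) (Set.Icc (-1) 1) := by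
    refine Complex.continuous_re.comp_continuousOn fun x hx => ContinuousAt.continuousWithinAt ?_
    have hσ : Continuous fun x => Function.update p e (σ x) :=
      continuous_const.update e (by fun_prop)
    exact (hG.analyticAt (by simpa [Prod.norm_mk] using h_norm x hx)).continuousAt.comp
      (f := fun x => (Function.update p e (σ x), star (Function.update p e (σ x))))
      (hσ.prodMk hσ.star).continuousAt
  have hφ_near : ∀ x ∈ Set.Icc (-1 : ℝ) 1, |(φ x).re - 2 * x| ≤ perturbSize n := fun x hx => by
    simpa [prod_update_eq_mul_prodErase, hσ_mul] using hG.abs_re_sub_le (h_norm x hx)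
  have h_small := perturbSize_le e.pos.ne'
  have h_left := abs_le.1 (hφ_near (-1) (by norm_num))
  have h_right := abs_le.1 (hφ_near 1 (by norm_num))
  obtain ⟨x, hx, hx0⟩ := intermediate_value_Icc (by norm_num : (-1 : ℝ) ≤ 1) hφ_cont
    (show (0 : ℝ) ∈ Set.Icc (φ (-1)).re (φ 1).re from ⟨by linarith, by linarith⟩)
  exact ⟨σ x, hσ_norm x hx, by simp [hσ_mul], Complex.ext hx0 (hL.im_eq_zero (h_norm x hx))⟩

end RealPoints

namespace SolvesCoord

variable {n : ℕ} {G γ : (Fin n → ℂ) × (Fin n → ℂ) → ℂ} {e : Fin n} {z w p v u : Fin n → ℂ}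
  {s : ℂ}

theorem analyticAt_projectedLevi_coordGraph (hγ : SolvesCoord G e (coordRadius n) γ)
    (hG : NearModel G) (hz : z ∈ annularBox e) (hw : w ∈ annularSet e) :
    AnalyticAt ℂ (projectedLevi G (Pi.single e 1) (Pi.single e 1) v u ∘ coordGraph e γ) (z, w) := by
  have hz' := annularBox_subset_slab e hz
  refine (analyticAt_projectedLevi (hG.analyticAt ?_)).comp (hγ.analyticAt_coordGraph hz' hw)
  exact (hγ.norm_coordGraph_le le_rfl hz' hw).trans (sub_le_self _ one_pos.le)

theorem coordGraph_update_star (hγ : SolvesCoord G e (coordRadius n) γ) (hp : p ∈ annularSet e)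
    (hs : ‖s‖ < coordRadius n)
    (h0 : G (Function.update p e s, star (Function.update p e s)) = 0) :
    coordGraph e γ (Function.update p e s, star p) =
      (Function.update p e s, star (Function.update p e s)) := by
  have hs' : ‖star s‖ ≤ 32 ^ n * coordRadius n := by
    rw [norm_star]
    nlinarith [one_le_pow_thirtyTwo n, norm_nonneg s]
  rw [star_update] at h0 ⊢
  rw [coordGraph, ← (hγ.eq_zero_iff (annularBox_subset_slab e (update_mem_annularBox hp hs))
    (star_mem_annularSet hp) hs').1 h0]

theorem projectedLevi_coordGraph_eq_zero_of_conjDiag (hγ : SolvesCoord G e (coordRadius n) γ)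
    (hG : NearModel G) (hL : LeviFlatOnConjDiag G (controlRadius n)) (hp : p ∈ annularSet e)
    (hs : ‖s‖ < coordRadius n)
    (h0 : G (Function.update p e s, star (Function.update p e s)) = 0) :
    projectedLevi G (Pi.single e 1) (Pi.single e 1) v u
      (coordGraph e γ (Function.update p e s, star p)) = 0 := by
  have h_box := update_mem_annularBox hp hs
  have h_norm := norm_le_coordRadius h_box
  have h_control := coordRadius_le_controlRadius_sub n
  rw [hγ.coordGraph_update_star hp hs h0]
  refine (hL.leviAt (by linarith) h0 fun h => ?_).projectedLevi_eq_zero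
  refine hG.fderiv_single_zero_ne_zero (e := e) ?_ h_box.1 (by rw [h]; rfl)
  simpa [Prod.norm_mk] using (by linarith : ‖Function.update p e s‖ ≤ controlRadius n - 1)

theorem projectedLevi_coordGraph_star (hγ : SolvesCoord G e (coordRadius n) γ)
    (hG : NearModel G) (hL : LeviFlatOnConjDiag G (controlRadius n)) (hp : p ∈ annularBox e) :
    projectedLevi G (Pi.single e 1) (Pi.single e 1) v u (coordGraph e γ (p, star p)) = 0 := by
  -- In the slice through `p` in the `e`-th direction, the zeros of `G` on the conjugate diagonal,
  -- at which the Levi form vanishes, accumulate.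
  let φ : ℂ → ℂ := fun s => projectedLevi G (Pi.single e 1) (Pi.single e 1) v u
    (coordGraph e γ (Function.update p e s, star p))
  have h_radius := two_mul_pow_eight_lt_coordRadius n
  have hφ : AnalyticOnNhd ℂ φ (Metric.ball 0 (coordRadius n)) := fun s hs =>
    (hγ.analyticAt_projectedLevi_coordGraph hG
      (update_mem_annularBox hp.1 (mem_ball_zero_iff.1 hs)) (star_mem_annularSet hp.1)).comp
      (f := fun s => (Function.update p e s, star p))
      ((analyticAt_update analyticAt_const analyticAt_id e).prod analyticAt_const)
  choose! σ hσ_norm hσ_im hσ_zero using fun y hy => hG.exists_conjDiag_zero hL hp.1 (y := y) hy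
  have h_infinite : (σ '' {y | |y| ≤ 1}).Infinite := by
    refine Set.Infinite.image (fun y hy y' hy' h => ?_) ?_
    · rw [← hσ_im y hy, ← hσ_im y' hy', h]
    · exact (Set.Icc_infinite (by norm_num : (-1 : ℝ) < 1)).mono fun _ hy => abs_le.2 hy
  obtain ⟨s₀, hs₀, h_acc⟩ := h_infinite.exists_accPt_of_subset_isCompact
    (isCompact_closedBall (0 : ℂ) (2 * 8 ^ n))
    (Set.image_subset_iff.2 fun y hy => by simpa using hσ_norm y hy)
  have h_freq : ∃ᶠ s in 𝓝[≠] s₀, φ s = 0 := by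
    refine (accPt_iff_frequently_nhdsNE.1 h_acc).mono ?_
    rintro _ ⟨y, hy, rfl⟩
    exact hγ.projectedLevi_coordGraph_eq_zero_of_conjDiag hG hL hp.1
      ((hσ_norm y hy).trans_lt h_radius) (hσ_zero y hy)
  simpa [φ] using hφ.eqOn_zero_of_preconnected_of_frequently_eq_zero
    (convex_ball _ _).isPreconnected (Metric.closedBall_subset_ball h_radius hs₀) h_freq
    (show p e ∈ Metric.ball 0 (coordRadius n) by simpa using hp.2)

theorem projectedLevi_coordGraph_eq_zero (hγ : SolvesCoord G e (coordRadius n) γ)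
    (hG : NearModel G) (hL : LeviFlatOnConjDiag G (controlRadius n)) (hz : z ∈ annularBox e)
    (hw : w ∈ annularBox e) :
    projectedLevi G (Pi.single e 1) (Pi.single e 1) v u (coordGraph e γ (z, w)) = 0 := by
  let center : Fin n → ℂ := fun _ => 1 / 2
  have h_center : star center = center := by
    ext
    simp [center]
  have h_ball := ball_half_subset_annularBox e
  have h_analytic : AnalyticOnNhd ℂ
      (projectedLevi G (Pi.single e 1) (Pi.single e 1) v u ∘ coordGraph e γ)
      (annularBox e ×ˢ annularBox e) := fun q hq =>
    hγ.analyticAt_projectedLevi_coordGraph hG hq.1 hq.2.1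
  have h_ball_prod : Metric.ball (center, star center) (1 / 4) ⊆ annularBox e ×ˢ annularBox e := by
    rw [h_center, ← ball_prod_same]
    exact Set.prod_mono h_ball h_ball
  have h_near := eq_zero_of_eq_zero_on_conjDiag
    (h_analytic.mono h_ball_prod).differentiableOn fun p hp =>
      hγ.projectedLevi_coordGraph_star hG hL (h_ball hp)
  exact h_analytic.eqOn_zero_of_preconnected_of_eventuallyEq_zero
    ((isPreconnected_annularBox e).prod (isPreconnected_annularBox e))
    (h_ball_prod (Metric.mem_ball_self (by norm_num)))
    (eventually_of_mem (Metric.ball_mem_nhds _ (by norm_num)) h_near) (Set.mk_mem_prod hz hw)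

theorem leviAt_coordGraph (hγ : SolvesCoord G e (coordRadius n) γ) (hG : NearModel G)
    (hL : LeviFlatOnConjDiag G (controlRadius n)) (hz : z ∈ annularBox e)
    (hw : w ∈ annularBox e) : LeviAt G (coordGraph e γ (z, w)) := by
  have h_norm := hγ.norm_coordGraph_le le_rfl (annularBox_subset_slab e hz) hw.1
  exact leviAt_of_projectedLevi_eq_zero (hG.fderiv_single_zero_ne_zero h_norm hz.1)
    (hG.fderiv_single_ne_zero h_norm (update_mem_annularSet_iff.2 hw.1)) fun v u =>
      hγ.projectedLevi_coordGraph_eq_zero hG hL hz hw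

end SolvesCoord

/-! ### The separated first integral -/

section Leaves

variable {U V W : Type*} [NormedAddCommGroup U] [NormedSpace ℂ U] [NormedAddCommGroup V]
  [NormedSpace ℂ V] [NormedAddCommGroup W] [NormedSpace ℂ W]

theorem fderiv_apply_fderiv_eq_zero {g : V → ℂ} {Q : U → V} {x : U}
    (hg : DifferentiableAt ℂ g (Q x)) (hQ : DifferentiableAt ℂ Q x)
    (h0 : ∀ᶠ y in 𝓝 x, g (Q y) = 0) (δ : U) : fderiv ℂ g (Q x) (fderiv ℂ Q x δ) = 0 := by
  have h_comp : HasFDerivAt (fun y => g (Q y)) (0 : U →L[ℂ] ℂ) x :=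
    (hasFDerivAt_const 0 x).congr_of_eventuallyEq h0
  exact DFunLike.congr_fun ((hg.hasFDerivAt.comp x hQ.hasFDerivAt).unique h_comp) δ

variable {G : V × W → ℂ} {ψ : U → W} {z v a : V} {x : U}

theorem hasFDerivAt_fderiv_prodMk_apply (hG : AnalyticAt ℂ G (z, ψ x))
    (hψ : DifferentiableAt ℂ ψ x) (v : V × W) :
    HasFDerivAt (fun y => fderiv ℂ G (z, ψ y) v)
      (((fderiv ℂ (fderiv ℂ G) (z, ψ x)).comp
        ((ContinuousLinearMap.inr ℂ V W).comp (fderiv ℂ ψ x))).flip v) x := by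
  have hQ : HasFDerivAt (fun y => (z, ψ y))
      ((ContinuousLinearMap.inr ℂ V W).comp (fderiv ℂ ψ x)) x :=
    (hasFDerivAt_const z x).prodMk hψ.hasFDerivAt
  refine ((hG.fderiv.differentiableAt.hasFDerivAt.comp x hQ).clm_apply
    (hasFDerivAt_const v x)).congr_fderiv ?_
  ext
  simp

/- The Levi condition says that the direction of the kernel of the first partial differential does
not change along a piece of `{z} × {G (z, ·) = 0}`. -/
theorem hasFDerivAt_fderiv_div_of_leviAt (hG : AnalyticAt ℂ G (z, ψ x))
    (hψ : DifferentiableAt ℂ ψ x) (h0 : ∀ᶠ y in 𝓝 x, G (z, ψ y) = 0) (hL : LeviAt G (z, ψ x))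
    (ha : fderiv ℂ G (z, ψ x) (a, 0) ≠ 0) :
    HasFDerivAt (fun y => fderiv ℂ G (z, ψ y) (v, 0) * (fderiv ℂ G (z, ψ y) (a, 0))⁻¹)
      (0 : U →L[ℂ] ℂ) x := by
  have h_tangent : ∀ δ, fderiv ℂ G (z, ψ x) (0, fderiv ℂ ψ x δ) = 0 := fun δ => by
    have hQ : HasFDerivAt (fun y => (z, ψ y))
        ((ContinuousLinearMap.inr ℂ V W).comp (fderiv ℂ ψ x)) x :=
      (hasFDerivAt_const z x).prodMk hψ.hasFDerivAt
    have := fderiv_apply_fderiv_eq_zero (Q := fun y => (z, ψ y)) hG.differentiableAt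
      hQ.differentiableAt h0 δ
    rwa [hQ.fderiv] at this
  refine ((hasFDerivAt_fderiv_prodMk_apply hG hψ (v, 0)).mul ((hasDerivAt_inv ha).comp_hasFDerivAt
    x (hasFDerivAt_fderiv_prodMk_apply hG hψ (a, 0)))).congr_fderiv ?_
  ext δ
  have h_levi := hL (fderiv ℂ G (z, ψ x) (a, 0) • v - fderiv ℂ G (z, ψ x) (v, 0) • a)
    (fderiv ℂ ψ x δ) (by rw [map_smul_sub_smul_prodMk_zero, mul_comm, sub_self]) (h_tangent δ)
  rw [map_smul_sub_smul_prodMk_zero] at h_levi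
  simp only [add_apply, smul_apply, ContinuousLinearMap.flip_apply,
    ContinuousLinearMap.comp_apply, ContinuousLinearMap.inr_apply, zero_apply, smul_eq_mul,
    Function.comp_apply]
  field_simp
  linear_combination h_levi

theorem fderiv_prodMk_zero_eq_zero_of_leviAt {S : Set U} (hS : IsOpen S)
    (hS' : IsPreconnected S) (hG : ∀ x ∈ S, AnalyticAt ℂ G (z, ψ x))
    (hψ : ∀ x ∈ S, DifferentiableAt ℂ ψ x) (h0 : ∀ x ∈ S, G (z, ψ x) = 0)
    (hL : ∀ x ∈ S, LeviAt G (z, ψ x)) (ha : ∀ x ∈ S, fderiv ℂ G (z, ψ x) (a, 0) ≠ 0) {x y : U}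
    (hx : x ∈ S) (hy : y ∈ S) (hv : fderiv ℂ G (z, ψ x) (v, 0) = 0) :
    fderiv ℂ G (z, ψ y) (v, 0) = 0 := by
  have h_deriv := fun x hx => hasFDerivAt_fderiv_div_of_leviAt (v := v) (hG x hx) (hψ x hx)
    (eventually_of_mem (hS.mem_nhds hx) h0) (hL x hx) (ha x hx)
  have h_const := hS.is_const_of_fderiv_eq_zero hS'
    (fun x hx => (h_deriv x hx).differentiableAt.differentiableWithinAt)
    (fun x hx => (h_deriv x hx).fderiv) hx hy
  rw [hv, zero_mul] at h_const
  exact (mul_eq_zero.1 h_const.symm).resolve_right (inv_ne_zero (ha y hy))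

end Leaves

theorem one_mem_annularBox {n : ℕ} (e : Fin n) : (1 : Fin n → ℂ) ∈ annularBox e :=
  ⟨fun i _ => by norm_num, by simpa using by linarith [three_le_coordRadius n]⟩

theorem half_mem_annularBox {n : ℕ} (e : Fin n) : (fun _ => 1 / 2 : Fin n → ℂ) ∈ annularBox e :=
  ball_half_subset_annularBox e (Metric.mem_ball_self (by norm_num))

theorem slab_two_subset {n : ℕ} (e : Fin n) : slab e 2 ⊆ slab e (coordRadius n) :=
  fun _ hz => ⟨hz.1, by linarith [hz.2, three_le_coordRadius n]⟩

namespace SolvesCoord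

variable {n : ℕ} {G γ : (Fin n → ℂ) × (Fin n → ℂ) → ℂ} {e : Fin n} {X : ℝ}
  {z w w' v : Fin n → ℂ}

theorem coordGraph_eq_self (hγ : SolvesCoord G e X γ) (hz : z ∈ slab e X)
    (hw : w ∈ annularSet e) (hwe : ‖w e‖ ≤ 32 ^ n * X) (h0 : G (z, w) = 0) :
    coordGraph e γ (z, w) = (z, w) := by
  rw [coordGraph, ← (hγ.eq_zero_iff hz hw hwe).1 (by simpa using h0), Function.update_eq_self]

theorem analyticAt_coordGraph_snd (hγ : SolvesCoord G e X γ) (hz : z ∈ slab e X)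
    (hw : w ∈ annularSet e) : AnalyticAt ℂ (fun w => (coordGraph e γ (z, w)).2) w :=
  (analyticAt_snd.comp (hγ.analyticAt_coordGraph hz hw)).comp (f := fun w => (z, w))
    (analyticAt_const.prod analyticAt_id)

theorem fderiv_coordGraph_prodMk_zero_eq_zero (hγ : SolvesCoord G e (coordRadius n) γ)
    (hG : NearModel G) (hL : LeviFlatOnConjDiag G (controlRadius n)) (hz : z ∈ annularBox e)
    (hw : w ∈ annularBox e) (hw' : w' ∈ annularBox e)
    (hv : fderiv ℂ G (coordGraph e γ (z, w)) (v, 0) = 0) :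
    fderiv ℂ G (coordGraph e γ (z, w')) (v, 0) = 0 := by
  have hz' := annularBox_subset_slab e hz
  have h_norm := fun w (hw : w ∈ annularBox e) => hγ.norm_coordGraph_le le_rfl hz' hw.1
  exact fderiv_prodMk_zero_eq_zero_of_leviAt (ψ := fun w => (coordGraph e γ (z, w)).2)
    (isOpen_annularBox e) (isPreconnected_annularBox e)
    (fun w hw => hG.analyticAt ((h_norm w hw).trans (sub_le_self _ one_pos.le)))
    (fun w hw => (hγ.analyticAt_coordGraph_snd hz' hw.1).differentiableAt)
    (fun w hw => hγ.apply_coordGraph hz' hw.1) (fun w hw => hγ.leviAt_coordGraph hG hL hz hw)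
    (fun w hw => hG.fderiv_single_zero_ne_zero (h_norm w hw) hz.1) hw hw' hv

theorem analyticAt_transversal (hγ : SolvesCoord G e X γ) (hz : z ∈ slab e X)
    (hw : w ∈ annularSet e) : AnalyticAt ℂ (fun z => γ (z, w)) z :=
  (hγ.analyticAt hz hw).comp (f := fun z => (z, w)) (analyticAt_id.prod analyticAt_const)

theorem fderiv_transversal_eq_zero (hγ : SolvesCoord G e X γ) (hX : X ≤ coordRadius n)
    (hG : NearModel G) (hz : z ∈ slab e X) (hw : w ∈ annularSet e)
    (hv : fderiv ℂ G (coordGraph e γ (z, w)) (v, 0) = 0) :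
    fderiv ℂ (fun z => γ (z, w)) z v = 0 := by
  have h_norm := hγ.norm_coordGraph_le hX hz hw
  have hQ : HasFDerivAt (fun z => coordGraph e γ (z, w)) _ z := (hasFDerivAt_id z).prodMk
    ((hasFDerivAt_update w (γ (z, w))).comp (g := Function.update w e) z
      (hγ.analyticAt_transversal hz hw).differentiableAt.hasFDerivAt)
  have h_tangent := fderiv_apply_fderiv_eq_zero (Q := fun z => coordGraph e γ (z, w))
    (hG.analyticAt (h_norm.trans (sub_le_self _ one_pos.le))).differentiableAt
    hQ.differentiableAt
    (eventually_of_mem ((isOpen_slab e X).mem_nhds hz) fun x hx => hγ.apply_coordGraph hx hw) v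
  have h_single : fderiv ℂ (fun z => coordGraph e γ (z, w)) z v =
      (v, fderiv ℂ (fun z => γ (z, w)) z v • Pi.single e 1) := by
    rw [hQ.fderiv]
    ext i
    · simp
    · rcases eq_or_ne i e with rfl | hi <;> simp [*]
  rw [h_single, map_prodMk_eq_add, hv, map_prodMk_zero_smul, zero_add, smul_eq_mul] at h_tangent
  exact (mul_eq_zero.1 h_tangent).resolve_right
    (hG.fderiv_single_ne_zero h_norm (update_mem_annularSet_iff.2 hw))

theorem norm_transversal_one_add_prod_le (hγ : SolvesCoord G e X γ) (hX : X ≤ coordRadius n)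
    (hG : NearModel G) (hz : z ∈ slab e X) : ‖γ (z, 1) + ∏ i, z i‖ ≤ perturbSize n := by
  have h_one := (one_mem_annularBox e).1
  have h_near := hG.norm_sub_le ((hγ.norm_coordGraph_le hX hz h_one).trans
    (sub_le_self _ one_pos.le))
  have h_erase : prodErase e (1 : Fin n → ℂ) = 1 := by simp [prodErase]
  rwa [hγ.apply_coordGraph hz h_one, zero_sub, norm_neg, prodModel, coordGraph,
    prod_update_eq_mul_prodErase, h_erase, mul_one, add_comm] at h_near

end SolvesCoord

/-- `a z + d w` is a first integral with separated variables of the hypersurface `G = 0` near the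
coordinates of index `≠ e` in the annulus, and it is a perturbation of `-prodModel`. -/
structure SeparatedIntegral {n : ℕ} (G : (Fin n → ℂ) × (Fin n → ℂ) → ℂ) (e : Fin n)
    (a d : (Fin n → ℂ) → ℂ) : Prop where
  analyticAt_left : ∀ {z}, z ∈ slab e 2 → AnalyticAt ℂ a z
  norm_left_le : ∀ {z}, z ∈ slab e 2 → ‖a z + ∏ i, z i‖ ≤ perturbSize n
  analyticAt_right : ∀ {w}, w ∈ slab e 2 → AnalyticAt ℂ d w
  norm_right_le : ∀ {w}, w ∈ slab e 2 → ‖d w + ∏ i, w i‖ ≤ 2 * perturbSize n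
  add_eq_zero : ∀ {z w}, z ∈ slab e 2 → z ∈ annularSet e → w ∈ slab e 2 → w ∈ annularSet e →
    G (z, w) = 0 → a z + d w = 0

section FirstIntegral

variable {n : ℕ} {G γ γ' : (Fin n → ℂ) × (Fin n → ℂ) → ℂ} {e : Fin n} {z w : Fin n → ℂ}

theorem SolvesCoord.coordGraph_snd_mem_annularBox (hγ' : SolvesCoord (G ∘ Prod.swap) e 2 γ')
    (hw : w ∈ slab e 2) (hz : z ∈ annularSet e) : (coordGraph e γ' (w, z)).2 ∈ annularBox e :=
  update_mem_annularBox hz ((hγ'.norm_lt hw hz).trans_le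
    (by rw [coordRadius]; linarith [one_le_pow_thirtyTwo n]))

theorem SolvesCoord.fderiv_transversal_one_eq_zero (hγ : SolvesCoord G e (coordRadius n) γ)
    (hG : NearModel G) (hL : LeviFlatOnConjDiag G (controlRadius n)) (hz : z ∈ annularBox e)
    (hw : w ∈ annularBox e) (h0 : G (z, w) = 0) {v : Fin n → ℂ}
    (hv : fderiv ℂ G (z, w) (v, 0) = 0) : fderiv ℂ (fun z => γ (z, 1)) z v = 0 := by
  have hz' := annularBox_subset_slab e hz
  have hwe : ‖w e‖ ≤ 32 ^ n * coordRadius n := by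
    nlinarith [one_le_pow_thirtyTwo n, hw.2, norm_nonneg (w e)]
  refine hγ.fderiv_transversal_eq_zero le_rfl hG hz' (one_mem_annularBox e).1
    (hγ.fderiv_coordGraph_prodMk_zero_eq_zero hG hL hz hw (one_mem_annularBox e) ?_)
  rwa [hγ.coordGraph_eq_self hz' hw.1 hwe h0]

/- For fixed `w`, the points `(coordGraph e γ' (w, z)).2` run through one leaf. -/
theorem SolvesCoord.transversal_one_leaf_const (hγ : SolvesCoord G e (coordRadius n) γ)
    (hγ' : SolvesCoord (G ∘ Prod.swap) e 2 γ') (hG : NearModel G)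
    (hL : LeviFlatOnConjDiag G (controlRadius n)) (hw : w ∈ slab e 2) (hwA : w ∈ annularSet e)
    {x y : Fin n → ℂ} (hx : x ∈ annularBox e) (hy : y ∈ annularBox e) :
    γ ((coordGraph e γ' (w, x)).2, 1) = γ ((coordGraph e γ' (w, y)).2, 1) := by
  let leaf : (Fin n → ℂ) → Fin n → ℂ := fun x => (coordGraph e γ' (w, x)).2
  have h_leaf : ∀ x ∈ annularBox e, DifferentiableAt ℂ leaf x := fun x hx =>
    (hγ'.analyticAt_coordGraph_snd hw hx.1).differentiableAt
  have h_box : ∀ x ∈ annularBox e, leaf x ∈ annularBox e := fun x hx =>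
    hγ'.coordGraph_snd_mem_annularBox hw hx.1
  have h_zero : ∀ x ∈ annularBox e, G (leaf x, w) = 0 := fun x hx => hγ'.apply_coordGraph hw hx.1
  have h_norm : ∀ x ∈ annularBox e, ‖(leaf x, w)‖ ≤ controlRadius n := fun x hx => by
    have := hγ'.norm_coordGraph_le (by linarith [three_le_coordRadius n]) hw hx.1
    rw [← norm_prodSwap] at this
    exact this.trans (sub_le_self _ one_pos.le)
  have h_deriv : ∀ x ∈ annularBox e,
      HasFDerivAt (fun x => γ (leaf x, 1)) (0 : (Fin n → ℂ) →L[ℂ] ℂ) x := fun x hx => by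
    refine ((hγ.analyticAt_transversal (annularBox_subset_slab e (h_box x hx))
      (one_mem_annularBox e).1).differentiableAt.hasFDerivAt.comp x
      (h_leaf x hx).hasFDerivAt).congr_fderiv ?_
    ext δ
    have hQ : HasFDerivAt (fun x => (leaf x, w)) _ x :=
      (h_leaf x hx).hasFDerivAt.prodMk (hasFDerivAt_const w x)
    refine hγ.fderiv_transversal_one_eq_zero hG hL (h_box x hx)
      ⟨hwA, (slab_two_subset e hw).2⟩ (h_zero x hx) ?_
    have h_tangent := fderiv_apply_fderiv_eq_zero (Q := fun x => (leaf x, w))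
      (hG.analyticAt (h_norm x hx)).differentiableAt hQ.differentiableAt
      (eventually_of_mem ((isOpen_annularBox e).mem_nhds hx) h_zero) δ
    rwa [hQ.fderiv] at h_tangent
  exact (isOpen_annularBox e).is_const_of_fderiv_eq_zero (isPreconnected_annularBox e)
    (fun x hx => (h_deriv x hx).differentiableAt.differentiableWithinAt)
    (fun x hx => (h_deriv x hx).fderiv) hx hy

theorem SolvesCoord.norm_leaf_prod_add_prod_le (hγ' : SolvesCoord (G ∘ Prod.swap) e 2 γ')
    (hG : NearModel G) (hw : w ∈ slab e 2) (hz : z ∈ annularSet e) :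
    ‖∏ i, (coordGraph e γ' (w, z)).2 i + ∏ i, w i‖ ≤ perturbSize n := by
  have h_norm := hγ'.norm_coordGraph_le (by linarith [three_le_coordRadius n]) hw hz
  have h_near := hG.swap.norm_sub_le (h_norm.trans (sub_le_self _ one_pos.le))
  rwa [hγ'.apply_coordGraph hw hz, zero_sub, norm_neg, prodModel, add_comm] at h_near

theorem NearModel.exists_separatedIntegral (hG : NearModel G)
    (hL : LeviFlatOnConjDiag G (controlRadius n)) (e : Fin n) :
    ∃ a d, SeparatedIntegral G e a d := by
  have h_three := three_le_coordRadius n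
  obtain ⟨γ, hγ⟩ := hG.exists_solvesCoord e (X := coordRadius n) (by linarith) le_rfl
  obtain ⟨γ', hγ'⟩ := hG.swap.exists_solvesCoord e (X := 2) (by norm_num) (by linarith)
  have h_one := (one_mem_annularBox e).1
  have h_half := half_mem_annularBox e
  let leaf : (Fin n → ℂ) → Fin n → ℂ := fun w => (coordGraph e γ' (w, fun _ => 1 / 2)).2
  have h_leaf : ∀ {w}, w ∈ slab e 2 → leaf w ∈ slab e (coordRadius n) := fun hw =>
    annularBox_subset_slab e (hγ'.coordGraph_snd_mem_annularBox hw h_half.1)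
  refine ⟨fun z => γ (z, 1), fun w => -γ (leaf w, 1), fun hz => ?_, fun hz => ?_, fun {w} hw => ?_,
    fun {w} hw => ?_, fun {z w} hz hzA hw hwA h0 => ?_⟩
  · exact hγ.analyticAt_transversal (slab_two_subset e hz) h_one
  · exact hγ.norm_transversal_one_add_prod_le le_rfl hG (slab_two_subset e hz)
  · refine ((hγ.analyticAt_transversal (h_leaf hw) h_one).comp (f := leaf) ?_).neg
    exact (analyticAt_snd.comp (hγ'.analyticAt_coordGraph hw h_half.1)).comp
      (f := fun w => (w, fun _ => 1 / 2)) (analyticAt_id.prod analyticAt_const)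
  · have h_split : -γ (leaf w, 1) + ∏ i, w i =
        (∏ i, leaf w i + ∏ i, w i) - (γ (leaf w, 1) + ∏ i, leaf w i) := by ring
    have h_leaf_prod : ‖∏ i, leaf w i + ∏ i, w i‖ ≤ perturbSize n :=
      hγ'.norm_leaf_prod_add_prod_le hG hw h_half.1
    have h_transversal := hγ.norm_transversal_one_add_prod_le le_rfl hG (h_leaf hw)
    rw [h_split, two_mul]
    exact (_root_.norm_sub_le _ _).trans (add_le_add h_leaf_prod h_transversal)
  · have hze : ‖z e‖ ≤ 32 ^ n * 2 := by linarith [hz.2, one_le_pow_thirtyTwo n]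
    have h_const := hγ.transversal_one_leaf_const hγ' hG hL hw hwA
      ⟨hzA, (slab_two_subset e hz).2⟩ h_half
    rw [hγ'.coordGraph_eq_self hw hzA hze h0] at h_const
    rw [h_const, add_neg_cancel]

end FirstIntegral

/-! ### Division by `G` -/

section Estimates

variable {ι : Type*} [Fintype ι] {z x : ι → ℂ} {c : ℝ} {t : ℂ}

theorem norm_prod_le_pow_card (h : ∀ i, ‖z i‖ ≤ c) : ‖∏ i, z i‖ ≤ c ^ Fintype.card ι := by
  rw [norm_prod]
  exact (Finset.prod_le_prod (fun _ _ => norm_nonneg _) fun i _ => h i).trans (by simp)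

theorem pow_card_le_norm_prod (hc : 0 ≤ c) (h : ∀ i, c ≤ ‖z i‖) :
    c ^ Fintype.card ι ≤ ‖∏ i, z i‖ := by
  rw [norm_prod]
  exact le_trans (by simp) (Finset.prod_le_prod (fun _ _ => hc) fun i _ => h i)

theorem half_le_re_mul_inv_add {x t : ℂ} (h0 : x + t ≠ 0) (h : ‖x‖ ≤ ‖x + t‖ / 2) :
    1 / 2 ≤ (t * (x + t)⁻¹).re := by
  have h_eq : t * (x + t)⁻¹ = 1 - x * (x + t)⁻¹ := by
    field_simp
    ring
  have h_norm : ‖x * (x + t)⁻¹‖ ≤ 1 / 2 := by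
    rw [norm_mul, norm_inv, ← div_eq_mul_inv, div_le_iff₀ (norm_pos_iff.2 h0)]
    linarith
  rw [h_eq, Complex.sub_re, Complex.one_re]
  linarith [Complex.re_le_norm (x * (x + t)⁻¹)]

theorem hasDerivAt_prod_add (h0 : ∀ i, x i + t ≠ 0) :
    HasDerivAt (fun t => ∏ i, (x i + t)) ((∏ i, (x i + t)) * ∑ i, (x i + t)⁻¹) t := by
  classical
  refine (HasDerivAt.fun_finsetProd (u := Finset.univ) fun i _ =>
    (hasDerivAt_id t).const_add (x i)).congr_deriv ?_
  rw [Finset.mul_sum]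
  refine Finset.sum_congr rfl fun i hi => ?_
  rw [smul_eq_mul, mul_one, ← Finset.mul_prod_erase _ _ hi, mul_comm (x i + t),
    mul_inv_cancel_right₀ (h0 i)]
  rfl

theorem le_norm_deriv_prod_add (hc : 0 < c) (hx : ∀ i, ‖x i‖ ≤ c / 2) (hxt : ∀ i, c ≤ ‖x i + t‖)
    (ht : ‖t‖ ≤ 1) :
    c ^ Fintype.card ι * (Fintype.card ι / 2) ≤ ‖deriv (fun t => ∏ i, (x i + t)) t‖ := by
  have h0 : ∀ i, x i + t ≠ 0 := fun i => norm_pos_iff.1 (hc.trans_le (hxt i))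
  have h_re : Fintype.card ι / 2 ≤ (t * ∑ i, (x i + t)⁻¹).re := by
    rw [Finset.mul_sum, Complex.re_sum]
    have := Finset.sum_le_sum fun i (_ : i ∈ Finset.univ) =>
      half_le_re_mul_inv_add (h0 i) ((hx i).trans (by linarith [hxt i]))
    simpa [div_eq_mul_inv] using this
  have h_sum : Fintype.card ι / 2 ≤ ‖∑ i, (x i + t)⁻¹‖ :=
    calc Fintype.card ι / 2 ≤ ‖t * ∑ i, (x i + t)⁻¹‖ := h_re.trans (Complex.re_le_norm _)
      _ ≤ 1 * ‖∑ i, (x i + t)⁻¹‖ := by rw [norm_mul]; gcongr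
      _ = ‖∑ i, (x i + t)⁻¹‖ := one_mul _
  rw [(hasDerivAt_prod_add h0).deriv, norm_mul]
  gcongr
  exact pow_card_le_norm_prod hc.le hxt

theorem norm_circleIntegral_inv_mul_sub_le {h : ℂ → ℂ} {k : ℂ} {r : ℝ}
    (hh : ContinuousOn h (Metric.sphere 0 1)) (hr : ∀ t ∈ Metric.sphere (0 : ℂ) 1, ‖h t - k‖ ≤ r) :
    ‖(2 * Real.pi * Complex.I : ℂ)⁻¹ • (∮ t in C(0, 1), t⁻¹ * h t) - k‖ ≤ r := by
  have h_inv : ContinuousOn (fun t : ℂ => t⁻¹) (Metric.sphere 0 1) :=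
    continuousOn_inv₀.mono fun t ht => Metric.ne_of_mem_sphere ht one_ne_zero
  have h_const : (2 * Real.pi * Complex.I : ℂ)⁻¹ • (∮ t in C(0, 1), t⁻¹ * k) = k := by
    have h_int := circleIntegral.integral_sub_center_inv (0 : ℂ) one_ne_zero
    simp only [sub_zero] at h_int
    simp_rw [mul_comm _ k, circleIntegral.integral_const_mul, h_int]
    rw [smul_eq_mul, mul_comm, mul_assoc, mul_inv_cancel₀ Complex.two_pi_I_ne_zero, mul_one]
  have h_sub : (∮ t in C(0, 1), (t⁻¹ * h t - t⁻¹ * k)) =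
      (∮ t in C(0, 1), t⁻¹ * h t) - ∮ t in C(0, 1), t⁻¹ * k :=
    circleIntegral.integral_sub ((h_inv.mul hh).circleIntegrable zero_le_one)
      ((h_inv.mul continuousOn_const).circleIntegrable zero_le_one)
  nth_rw 1 [← h_const]
  rw [← smul_sub, ← h_sub]
  refine (circleIntegral.norm_two_pi_i_inv_smul_integral_le_of_norm_le_const zero_le_one
    fun t ht => ?_).trans_eq (one_mul r)
  rw [← mul_sub, norm_mul, norm_inv, mem_sphere_zero_iff_norm.1 ht, inv_one, one_mul]
  exact hr t ht

end Estimates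

section Shift

variable {n : ℕ} {q : (Fin n → ℂ) × (Fin n → ℂ)} {t : ℂ}

/-- Translation of the first variable by the vector `(t, …, t)`. -/
def shift (x : ((Fin n → ℂ) × (Fin n → ℂ)) × ℂ) : (Fin n → ℂ) × (Fin n → ℂ) :=
  (x.1.1 + fun _ => x.2, x.1.2)

theorem shift_zero (q : (Fin n → ℂ) × (Fin n → ℂ)) : shift (q, 0) = q := by
  ext <;> simp [shift]

theorem analyticAt_shift (x : ((Fin n → ℂ) × (Fin n → ℂ)) × ℂ) : AnalyticAt ℂ shift x :=
  ((analyticAt_fst.comp analyticAt_fst).add (AnalyticAt.pi fun _ => analyticAt_snd)).prod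
    (analyticAt_snd.comp analyticAt_fst)

theorem hasDerivAt_shift (q : (Fin n → ℂ) × (Fin n → ℂ)) (t : ℂ) :
    HasDerivAt (fun t => shift (q, t)) (1, 0) t :=
  ((hasDerivAt_pi.2 fun _ => hasDerivAt_id t).const_add q.1).prodMk (hasDerivAt_const t q.2)

theorem fderiv_prodModel_shift (q : (Fin n → ℂ) × (Fin n → ℂ)) (t : ℂ) :
    fderiv ℂ prodModel (shift (q, t)) (1, 0) = deriv (fun t => ∏ i, (q.1 i + t)) t := by
  have h_deriv := ((analyticAt_prodModel _).differentiableAt.hasFDerivAt.comp_hasDerivAt t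
    (hasDerivAt_shift q t)).sub_const (∏ i, q.2 i)
  have h_fun : (fun t => (prodModel ∘ fun t => shift (q, t)) t - ∏ i, q.2 i) =
      fun t => ∏ i, (q.1 i + t) := by
    ext
    simp [prodModel, shift]
  rw [← h_fun, h_deriv.deriv]

/-- A convex neighbourhood of the origin on which `G` has no zeros on the circles
`t ↦ shift (q, t)`, `|t| = 1`. Its second factor is large enough to contain `(1/2, …, 1/2)`. -/
def shiftDomain (n : ℕ) : Set ((Fin n → ℂ) × (Fin n → ℂ)) :=
  Metric.ball 0 (1 / 20) ×ˢ Metric.ball 0 (3 / 5)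

theorem isOpen_shiftDomain (n : ℕ) : IsOpen (shiftDomain n) :=
  Metric.isOpen_ball.prod Metric.isOpen_ball

theorem zero_mem_shiftDomain (n : ℕ) : 0 ∈ shiftDomain n := by
  constructor <;> simp

theorem norm_fst_lt (hq : q ∈ shiftDomain n) (i : Fin n) : ‖q.1 i‖ < 1 / 20 :=
  (norm_le_pi_norm q.1 i).trans_lt (by simpa using hq.1)

theorem norm_snd_lt (hq : q ∈ shiftDomain n) (i : Fin n) : ‖q.2 i‖ < 3 / 5 :=
  (norm_le_pi_norm q.2 i).trans_lt (by simpa using hq.2)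

theorem norm_shift_fst_lt (hq : q ∈ shiftDomain n) (i : Fin n) :
    ‖(shift (q, t)).1 i‖ < ‖t‖ + 1 / 20 :=
  (norm_add_le (q.1 i) t).trans_lt (by linarith [norm_fst_lt hq i])

theorem lt_norm_shift_fst (hq : q ∈ shiftDomain n) (i : Fin n) :
    ‖t‖ - 1 / 20 < ‖(shift (q, t)).1 i‖ := by
  have h_norm : ‖t‖ ≤ ‖q.1 i + t‖ + ‖q.1 i‖ := by simpa using norm_sub_le (q.1 i + t) (q.1 i)
  have h_shift : (shift (q, t)).1 i = q.1 i + t := rfl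
  linarith [norm_fst_lt hq i, h_shift ▸ h_norm]

theorem shift_fst_mem_slab (e : Fin n) (hq : q ∈ shiftDomain n) (ht : ‖t‖ ≤ 1) :
    (shift (q, t)).1 ∈ slab e 2 :=
  have h_lt : ∀ i, ‖(shift (q, t)).1 i‖ < 2 := fun i => by
    linarith [norm_shift_fst_lt (t := t) hq i]
  ⟨fun i _ => h_lt i, h_lt e⟩

theorem snd_mem_slab (e : Fin n) (hq : q ∈ shiftDomain n) : q.2 ∈ slab e 2 :=
  ⟨fun i _ => by linarith [norm_snd_lt hq i], by linarith [norm_snd_lt hq e]⟩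

theorem norm_shift_le (hq : q ∈ shiftDomain n) (ht : ‖t‖ ≤ 1) :
    ‖shift (q, t)‖ ≤ controlRadius n - 1 := by
  have h_two : (2 : ℝ) ≤ controlRadius n - 1 := by
    linarith [three_le_coordRadius n, coordRadius_le_controlRadius_sub n]
  refine (norm_prodMk_le zero_le_two (fun i => ?_) fun i => ?_).trans h_two
  · exact (norm_shift_fst_lt (t := t) hq i).le.trans (by linarith)
  · exact (norm_snd_lt hq i).le.trans (by norm_num)

end Shift

theorem pow_add_perturbSize_lt {n : ℕ} (hn : n ≠ 0) {x y : ℝ} (hx : 0 ≤ x)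
    (hxy : x + 1 / 100 < y) : x ^ n + perturbSize n < y ^ n :=
  (pow_add_pow_le hx (by norm_num) hn).trans_lt (pow_lt_pow_left₀ hxy (by linarith) hn)

namespace NearModel

variable {n : ℕ} {G : (Fin n → ℂ) × (Fin n → ℂ) → ℂ} {q : (Fin n → ℂ) × (Fin n → ℂ)} {t : ℂ}

theorem ne_zero_of_norm_snd_le (hG : NearModel G) (hn : n ≠ 0) (hq : ‖q‖ ≤ controlRadius n)
    {x y : ℝ} (hx : 0 ≤ x) (hxy : x + 1 / 100 < y) (h_snd : ∀ i, ‖q.2 i‖ ≤ x)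
    (h_fst : ∀ i, y ≤ ‖q.1 i‖) : G q ≠ 0 := by
  intro h0
  have h_near := hG.norm_sub_le hq
  rw [h0, zero_sub, norm_neg, prodModel] at h_near
  have h_prod_fst := pow_card_le_norm_prod (by linarith) h_fst
  have h_prod_snd := norm_prod_le_pow_card h_snd
  rw [Fintype.card_fin] at h_prod_fst h_prod_snd
  have h_triangle := _root_.norm_sub_le (∏ i, q.1 i + ∏ i, q.2 i) (∏ i, q.2 i)
  rw [add_sub_cancel_right] at h_triangle
  linarith [pow_add_perturbSize_lt hn hx hxy]

theorem analyticAt_comp_shift (hG : NearModel G) (hq : q ∈ shiftDomain n) (ht : ‖t‖ ≤ 1) :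
    AnalyticAt ℂ (G ∘ shift) (q, t) :=
  (hG.analyticAt ((norm_shift_le hq ht).trans (sub_le_self _ one_pos.le))).comp
    (analyticAt_shift _)

theorem apply_shift_ne_zero_of_norm_eq_one (hG : NearModel G) (hn : n ≠ 0)
    (hq : q ∈ shiftDomain n) (ht : ‖t‖ = 1) : G (shift (q, t)) ≠ 0 :=
  hG.ne_zero_of_norm_snd_le hn ((norm_shift_le hq ht.le).trans (sub_le_self _ one_pos.le))
    (x := 3 / 5) (y := 19 / 20) (by norm_num) (by norm_num) (fun i => (norm_snd_lt hq i).le)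
    fun i => by linarith [lt_norm_shift_fst (t := t) hq i]

theorem quarter_lt_norm_of_apply_shift_eq_zero (hG : NearModel G) (hn : n ≠ 0)
    (hq : q ∈ shiftDomain n) (hw : ∀ i, 2 / 5 < ‖q.2 i‖) (ht : ‖t‖ ≤ 1)
    (h0 : G (shift (q, t)) = 0) : 1 / 4 < ‖t‖ := by
  by_contra! h_le
  refine hG.swap.ne_zero_of_norm_snd_le (q := (shift (q, t)).swap) hn ?_ (x := 3 / 10)
    (y := 2 / 5) (by norm_num) (by norm_num) (fun i => ?_) (fun i => (hw i).le) h0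
  · rw [norm_prodSwap]
    exact (norm_shift_le hq ht).trans (sub_le_self _ one_pos.le)
  · exact (norm_shift_fst_lt hq i).le.trans (by linarith)

theorem deriv_comp_shift_ne_zero (hG : NearModel G) (hn : n ≠ 0) (hq : q ∈ shiftDomain n)
    (ht : ‖t‖ ≤ 1) (ht' : 1 / 4 < ‖t‖) : deriv (fun t => G (shift (q, t))) t ≠ 0 := by
  have h_norm := norm_shift_le hq ht
  have h_deriv : deriv (fun t => G (shift (q, t))) t = fderiv ℂ G (shift (q, t)) (1, 0) :=
    ((hG.analyticAt (h_norm.trans (sub_le_self _ one_pos.le))).differentiableAt.hasFDerivAt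
      |>.comp_hasDerivAt t (hasDerivAt_shift q t)).deriv
  have h_near := hG.norm_fderiv_sub_le h_norm (v := (1, 0))
    (norm_prodMk_le zero_le_one (by simp) (by simp))
  have h_model := le_norm_deriv_prod_add (x := q.1) (t := t) (c := 1 / 5) (by norm_num)
    (fun i => by linarith [norm_fst_lt hq i])
    (fun i => le_trans (by linarith) (lt_norm_shift_fst hq i).le) ht
  rw [fderiv_prodModel_shift] at h_near
  rw [Fintype.card_fin] at h_model
  intro h0
  rw [← h_deriv, h0, zero_sub, norm_neg] at h_near
  have h_card : (1 : ℝ) ≤ n := by exact_mod_cast Nat.one_le_iff_ne_zero.2 hn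
  have h_small : perturbSize n * 5 ^ n < (1 / 5) ^ n * (n / 2) * 5 ^ n := by
    have := perturbSize_mul_pow_le hn (c := 5) (by norm_num) (by norm_num)
    have h_cancel : (1 / 5 : ℝ) ^ n * (n / 2) * 5 ^ n = n / 2 := by
      rw [mul_right_comm, ← mul_pow]
      norm_num
    linarith
  linarith [lt_of_mul_lt_mul_right h_small (by positivity)]

end NearModel

/-- The Cauchy integral for `Φ / G` over the circles `t ↦ shift (q, t)`, `|t| = 1`. It makes sense
as soon as `G` has no zeros on these circles, whatever its zeros inside them. -/
noncomputable def cauchyQuotient {n : ℕ} (Φ G : (Fin n → ℂ) × (Fin n → ℂ) → ℂ)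
    (q : (Fin n → ℂ) × (Fin n → ℂ)) : ℂ :=
  (2 * Real.pi * Complex.I : ℂ)⁻¹ •
    ∮ t in C(0, 1), t⁻¹ * (Φ (shift (q, t)) / G (shift (q, t)))

namespace SeparatedIntegral

variable {n : ℕ} {G : (Fin n → ℂ) × (Fin n → ℂ) → ℂ} {e : Fin n} {a d : (Fin n → ℂ) → ℂ}
  {q : (Fin n → ℂ) × (Fin n → ℂ)} {t : ℂ}

theorem analyticAt_shift (h : SeparatedIntegral G e a d) (hq : q ∈ shiftDomain n)
    (ht : ‖t‖ ≤ 1) : AnalyticAt ℂ (fun q => a q.1 + d q.2) (shift (q, t)) :=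
  ((h.analyticAt_left (shift_fst_mem_slab e hq ht)).comp (f := Prod.fst) analyticAt_fst).add
    (AnalyticAt.comp (f := Prod.snd) (x := shift (q, t))
      (h.analyticAt_right (w := q.2) (snd_mem_slab e hq)) analyticAt_snd)

theorem analyticAt_comp_shift (h : SeparatedIntegral G e a d) (hq : q ∈ shiftDomain n)
    (ht : ‖t‖ ≤ 1) : AnalyticAt ℂ ((fun q => a q.1 + d q.2) ∘ shift) (q, t) :=
  (h.analyticAt_shift hq ht).comp (_root_.analyticAt_shift _)

theorem analyticAt_div_comp_shift (h : SeparatedIntegral G e a d) (hG : NearModel G)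
    (hq : q ∈ shiftDomain n) (ht : t ∈ Metric.sphere (0 : ℂ) 1) :
    AnalyticAt ℂ (((fun q => a q.1 + d q.2) ∘ shift) / (G ∘ shift)) (q, t) :=
  have ht := mem_sphere_zero_iff_norm.1 ht
  (h.analyticAt_comp_shift hq ht.le).div (hG.analyticAt_comp_shift hq ht.le)
    (hG.apply_shift_ne_zero_of_norm_eq_one e.pos.ne' hq ht)

theorem differentiableAt_cauchyQuotient (h : SeparatedIntegral G e a d) (hG : NearModel G)
    (hq : q ∈ shiftDomain n) :
    DifferentiableAt ℂ (cauchyQuotient (fun q => a q.1 + d q.2) G) q :=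
  DifferentiableAt.fun_const_smul
    (differentiableAt_circleIntegral zero_le_one (isOpen_shiftDomain n)
      (f := fun x => x.2⁻¹ * ((a (shift x).1 + d (shift x).2) / G (shift x)))
      (fun q hq t ht =>
        (analyticAt_snd.inv (f := Prod.snd) (x := (q, t))
          (Metric.ne_of_mem_sphere ht one_ne_zero)).mul
            (h.analyticAt_div_comp_shift hG hq ht)) hq) _

theorem norm_add_le (h : SeparatedIntegral G e a d) (hG : NearModel G) (hq : q ∈ shiftDomain n)
    (ht : ‖t‖ ≤ 1) :
    ‖a (shift (q, t)).1 + d (shift (q, t)).2 + G (shift (q, t))‖ ≤ 4 * perturbSize n := by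
  have h_split : a (shift (q, t)).1 + d (shift (q, t)).2 + G (shift (q, t)) =
      (a (shift (q, t)).1 + ∏ i, (shift (q, t)).1 i) + (d q.2 + ∏ i, q.2 i) +
        (G (shift (q, t)) - prodModel (shift (q, t))) := by
    simp only [prodModel, shift]
    ring
  have h_left := h.norm_left_le (shift_fst_mem_slab e hq ht)
  have h_right := h.norm_right_le (snd_mem_slab e hq)
  have h_near := hG.norm_sub_le ((norm_shift_le hq ht).trans (sub_le_self _ one_pos.le))
  rw [h_split]
  exact norm_add₃_le.trans (by linarith)

theorem norm_div_add_one_le (h : SeparatedIntegral G e a d) (hG : NearModel G) (ht : ‖t‖ = 1) :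
    ‖(a (shift (0, t)).1 + d (shift (0, t)).2) / G (shift (0, t)) - (-1)‖ ≤ 1 / 2 := by
  have hn := e.pos.ne'
  have h0 := zero_mem_shiftDomain n
  have h_ne := hG.apply_shift_ne_zero_of_norm_eq_one hn h0 ht
  have h_small := perturbSize_le hn
  have h_near := hG.norm_sub_le ((norm_shift_le h0 ht.le).trans (sub_le_self _ one_pos.le))
  have h_model : prodModel (shift ((0 : (Fin n → ℂ) × (Fin n → ℂ)), t)) = t ^ n := by
    simp [prodModel, shift, hn]
  have h_lower : 1 - perturbSize n ≤ ‖G (shift (0, t))‖ := by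
    have h_triangle := norm_sub_norm_le (t ^ n) (t ^ n - G (shift (0, t)))
    rw [sub_sub_cancel, norm_pow, ht, one_pow, norm_sub_rev, ← h_model] at h_triangle
    linarith
  rw [sub_neg_eq_add, div_add_one h_ne, norm_div, div_le_iff₀ (norm_pos_iff.2 h_ne)]
  linarith [h.norm_add_le hG h0 ht.le]

theorem cauchyQuotient_zero_ne_zero (h : SeparatedIntegral G e a d) (hG : NearModel G) :
    cauchyQuotient (fun q => a q.1 + d q.2) G 0 ≠ 0 := by
  have h_cont : ContinuousOn (fun t => (a (shift (0, t)).1 + d (shift (0, t)).2) / G (shift (0, t)))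
      (Metric.sphere (0 : ℂ) 1) := fun t ht =>
    ((h.analyticAt_div_comp_shift hG (zero_mem_shiftDomain n) ht).continuousAt.comp
      (f := fun t => (0, t)) (by fun_prop)).continuousWithinAt
  have h_near := norm_circleIntegral_inv_mul_sub_le h_cont fun t ht =>
    h.norm_div_add_one_le hG (mem_sphere_zero_iff_norm.1 ht)
  intro h0
  rw [cauchyQuotient] at h0
  rw [h0] at h_near
  norm_num at h_near

/- Here all zeros of `G` on the discs bounded by the circles are simple, and they lie in the region
where the first integral vanishes on the zeros of `G`. -/
theorem cauchyQuotient_mul_eq (h : SeparatedIntegral G e a d) (hG : NearModel G)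
    (hq : q ∈ shiftDomain n) (hw : ∀ i, 2 / 5 < ‖q.2 i‖) :
    cauchyQuotient (fun q => a q.1 + d q.2) G q * G q = a q.1 + d q.2 := by
  have hn := e.pos.ne'
  have h_zero : ∀ t ∈ Metric.closedBall (0 : ℂ) 1, G (shift (q, t)) = 0 →
      a (shift (q, t)).1 + d (shift (q, t)).2 = 0 ∧ deriv (fun t => G (shift (q, t))) t ≠ 0 := by
    intro t ht h0
    rw [mem_closedBall_zero_iff] at ht
    have h_quarter := hG.quarter_lt_norm_of_apply_shift_eq_zero hn hq hw ht h0
    have h_slab := shift_fst_mem_slab e hq ht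
    refine ⟨h.add_eq_zero (w := q.2) h_slab (fun i hi => ⟨?_, h_slab.1 i hi⟩) (snd_mem_slab e hq)
      (fun i hi => ⟨by linarith [hw i], (snd_mem_slab e hq).1 i hi⟩) h0,
      hG.deriv_comp_shift_ne_zero hn hq ht h_quarter⟩
    linarith [lt_norm_shift_fst (t := t) hq i]
  have h_ne : G (shift (q, 0)) ≠ 0 := fun h0 => by
    have := hG.quarter_lt_norm_of_apply_shift_eq_zero hn hq hw (by simp) h0
    norm_num at this
  have h_line : ∀ t, AnalyticAt ℂ (fun t : ℂ => (q, t)) t := fun t =>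
    analyticAt_const.prod analyticAt_id
  have h_cauchy := circleIntegral_inv_mul_div_eq
    (fun t ht => (h.analyticAt_comp_shift hq (mem_closedBall_zero_iff.1 ht)).comp (h_line t))
    (fun t ht => (hG.analyticAt_comp_shift hq (mem_closedBall_zero_iff.1 ht)).comp (h_line t))
    h_zero (fun t ht => hG.apply_shift_ne_zero_of_norm_eq_one hn hq
      (mem_sphere_zero_iff_norm.1 ht)) h_ne
  simp only [Function.comp_apply, shift_zero] at h_cauchy h_ne
  exact (eq_div_iff h_ne).1 h_cauchy

theorem exists_eq_unit_mul (h : SeparatedIntegral G e a d) (hG : NearModel G) :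
    ∃ U : (Fin n → ℂ) × (Fin n → ℂ) → ℂ, DifferentiableAt ℂ U 0 ∧ U 0 ≠ 0 ∧
      ∀ᶠ q in 𝓝 0, a q.1 + d q.2 = U q * G q := by
  have h_dom := isOpen_shiftDomain n
  refine ⟨cauchyQuotient (fun q => a q.1 + d q.2) G,
    h.differentiableAt_cauchyQuotient hG (zero_mem_shiftDomain n),
    h.cauchyQuotient_zero_ne_zero hG, ?_⟩
  let o : (Fin n → ℂ) × (Fin n → ℂ) := (0, fun _ => 1 / 2)
  have ho : o ∈ shiftDomain n := by
    refine ⟨Metric.mem_ball_self (by norm_num), ?_⟩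
    rw [mem_ball_zero_iff, pi_norm_lt_iff (by norm_num)]
    exact fun i => by norm_num [o]
  have h_diff : DifferentiableOn ℂ (fun q => cauchyQuotient (fun q => a q.1 + d q.2) G q * G q -
      (a q.1 + d q.2)) (shiftDomain n) := fun q hq => by
    have hG_at := hG.analyticAt ((norm_shift_le hq (t := 0) (by simp)).trans
      (sub_le_self _ one_pos.le))
    have h_at := h.analyticAt_shift hq (t := 0) (by simp)
    rw [shift_zero] at hG_at h_at
    exact (((h.differentiableAt_cauchyQuotient hG hq).mul hG_at.differentiableAt).sub
      h_at.differentiableAt).differentiableWithinAt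
  have h_large : ∀ᶠ q in 𝓝 o, ∀ i, 2 / 5 < ‖q.2 i‖ := eventually_all.2 fun i =>
    (Continuous.tendsto (f := fun q : (Fin n → ℂ) × (Fin n → ℂ) => ‖q.2 i‖) (by fun_prop)
      o).eventually_const_lt (by norm_num [o])
  have h_eqOn := eqOn_zero_of_convex_of_eventuallyEq_zero h_dom
    ((convex_ball _ _).prod (convex_ball _ _)) h_diff ho (by
      filter_upwards [h_dom.mem_nhds ho, h_large] with q hq hw
      exact sub_eq_zero.2 (h.cauchyQuotient_mul_eq hG hq hw))
  filter_upwards [h_dom.mem_nhds (zero_mem_shiftDomain n)] with q hq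
  exact (sub_eq_zero.1 (h_eqOn hq)).symm

end SeparatedIntegral

/-! ### Rescaling -/

section Rescale

variable {V W E F : Type*} [NormedAddCommGroup V] [NormedSpace ℂ V] [NormedAddCommGroup W]
  [NormedSpace ℂ W] [NormedAddCommGroup E] [NormedSpace ℂ E] [NormedAddCommGroup F]
  [NormedSpace ℂ F]

theorem fderiv_const_smul_comp_smul (g : E → F) (c l : ℂ) :
    fderiv ℂ (fun q => c • g (l • q)) = fun q => (c * l) • fderiv ℂ g (l • q) := by
  ext1 q
  have h_smul : fderiv ℂ (fun q => c • g (l • q)) q = c • fderiv ℂ (fun q => g (l • q)) q :=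
    congrFun (fderiv_const_smul_field (𝕜 := ℂ) (f := fun q => g (l • q)) c) q
  rw [h_smul, fderiv_comp_smul, smul_smul]

theorem LeviAt.const_smul_comp_smul {G : V × W → ℂ} {c l : ℂ} {q : V × W} (hc : c ≠ 0)
    (hl : l ≠ 0) (h : LeviAt G (l • q)) : LeviAt (fun q => c • G (l • q)) q := by
  intro v u hv hu
  rw [fderiv_const_smul_comp_smul, fderiv_const_smul_comp_smul (fderiv ℂ G)]
  rw [fderiv_const_smul_comp_smul] at hv hu
  simp only [smul_apply, smul_eq_mul, mul_eq_zero, hc, hl, false_or] at hv hu ⊢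
  exact h v u hv hu

theorem eventually_forall_norm_le_smul {P : E → Prop} (hP : ∀ᶠ q in 𝓝 0, P q) (R : ℝ) :
    ∀ᶠ l : ℝ in 𝓝[>] 0, ∀ q, ‖q‖ ≤ R → P ((l : ℂ) • q) := by
  obtain ⟨ε, hε, h⟩ := Metric.eventually_nhds_iff.1 hP
  have h_tendsto : Tendsto (fun l : ℝ => l * R) (𝓝[>] 0) (𝓝 0) :=
    (Continuous.tendsto' (continuous_mul_const R) _ _ (zero_mul R)).mono_left nhdsWithin_le_nhds
  filter_upwards [self_mem_nhdsWithin, h_tendsto.eventually_lt_const hε] with l hl0 hl q hq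
  refine h ?_
  rw [dist_zero_right, norm_smul, Complex.norm_real, Real.norm_of_nonneg (le_of_lt hl0)]
  exact (mul_le_mul_of_nonneg_left hq (le_of_lt hl0)).trans_lt hl

end Rescale

section Dilate

variable {n : ℕ} {G : (Fin n → ℂ) × (Fin n → ℂ) → ℂ}

/-- The dilation of `G` by the factor `l`, normalised so that `prodModel / 2` becomes
`prodModel`. -/
noncomputable def dilate (G : (Fin n → ℂ) × (Fin n → ℂ) → ℂ) (l : ℝ) :
    (Fin n → ℂ) × (Fin n → ℂ) → ℂ :=
  fun q => (2 / (l : ℂ) ^ n) • G ((l : ℂ) • q)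

theorem prodModel_smul (l : ℂ) (q : (Fin n → ℂ) × (Fin n → ℂ)) :
    prodModel (l • q) = l ^ n * prodModel q := by
  simp [prodModel, Finset.prod_mul_distrib, mul_add]

theorem norm_dilate_sub_prodModel_le {l C : ℝ} (hl : 0 < l) {q : (Fin n → ℂ) × (Fin n → ℂ)}
    (h : ‖G ((l : ℂ) • q) - prodModel ((l : ℂ) • q) / 2‖ ≤ C * ‖(l : ℂ) • q‖ ^ (n + 1)) :
    ‖dilate G l q - prodModel q‖ ≤ 2 * C * ‖q‖ ^ (n + 1) * l := by
  have hlC : (l : ℂ) ≠ 0 := by exact_mod_cast hl.ne'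
  have h_eq : dilate G l q - prodModel q =
      2 / (l : ℂ) ^ n * (G ((l : ℂ) • q) - prodModel ((l : ℂ) • q) / 2) := by
    rw [prodModel_smul, dilate, smul_eq_mul]
    field_simp
  have h_norm : ‖2 / (l : ℂ) ^ n‖ = 2 / l ^ n := by
    simp [abs_of_pos hl]
  rw [norm_smul, Complex.norm_real, Real.norm_of_nonneg hl.le] at h
  calc ‖dilate G l q - prodModel q‖ ≤ 2 / l ^ n * (C * (l * ‖q‖) ^ (n + 1)) := by
        rw [h_eq, norm_mul, h_norm]
        gcongr
    _ = 2 * C * ‖q‖ ^ (n + 1) * l := by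
        rw [mul_pow, pow_succ l]
        field_simp

theorem eventually_nearModel_dilate (hG : AnalyticAt ℂ G 0)
    (h_ord : (fun q => G q - prodModel q / 2) =O[𝓝 0] fun q => ‖q‖ ^ (n + 1)) :
    ∀ᶠ l in 𝓝[>] 0, NearModel (dilate G l) := by
  obtain ⟨C, hC0, hC⟩ := h_ord.exists_pos
  have h_tendsto : Tendsto (fun l : ℝ => 2 * C * controlRadius n ^ (n + 1) * l) (𝓝[>] 0) (𝓝 0) :=
    (Continuous.tendsto' (by fun_prop) _ _ (mul_zero _)).mono_left nhdsWithin_le_nhds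
  filter_upwards [self_mem_nhdsWithin, h_tendsto.eventually_lt_const (perturbSize_pos n),
    eventually_forall_norm_le_smul (hC.bound.and hG.eventually_analyticAt) (controlRadius n)]
    with l (hl0 : 0 < l) hl h
  refine ⟨fun {q} hq => ?_, fun {q} hq => ?_⟩
  · exact analyticAt_const.fun_smul ((h q hq).2.fun_comp (f := fun q => (l : ℂ) • q)
      (analyticAt_const.fun_smul analyticAt_id))
  · refine (norm_dilate_sub_prodModel_le hl0 (by simpa using (h q hq).1)).trans ?_
    refine le_trans ?_ hl.le
    gcongr

theorem eventually_leviFlatOnConjDiag_dilate {F : (Fin n → ℂ) → ℝ} (hLF : LeviFlatGerm F)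
    (hG : IsComplexification F G) (R : ℝ) :
    ∀ᶠ l in 𝓝[>] 0, LeviFlatOnConjDiag (dilate G l) R := by
  filter_upwards [self_mem_nhdsWithin, eventually_forall_norm_le_smul
    (hG.2.and (eventually_leviAt_of_leviFlatGerm hLF hG)) R] with l (hl0 : 0 < l) h
  have hlC : (l : ℂ) ≠ 0 := by exact_mod_cast hl0.ne'
  have hc : 2 / (l : ℂ) ^ n ≠ 0 := div_ne_zero two_ne_zero (pow_ne_zero _ hlC)
  have h_diag : ∀ p : Fin n → ℂ, (l : ℂ) • (p, star p) = ((l : ℂ) • p, star ((l : ℂ) • p)) :=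
    fun p => by ext <;> simp
  refine ⟨fun {p} hp => ?_, fun {p} hp h0 h_deriv => LeviAt.const_smul_comp_smul hc hlC ?_⟩
  · have h_real : dilate G l (p, star p) = ((2 / l ^ n * F ((l : ℂ) • p) : ℝ) : ℂ) := by
      rw [dilate, h_diag, (h p hp).1]
      push_cast
      rfl
    rw [h_real, Complex.ofReal_im]
  · rw [h_diag]
    refine (h p hp).2 ?_ fun h_zero => h_deriv ?_
    · rw [dilate, h_diag] at h0
      exact (smul_eq_zero.1 h0).resolve_left hc
    · unfold dilate
      simp only [fderiv_const_smul_comp_smul, h_diag, h_zero, smul_zero]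

end Dilate

/-! ### The holomorphic defining function -/

/-- As germs at the origin, `a z + d w` is the product of `G` by a unit `U`, with the
normalisations `a 0 = d 0 = 0` and `U 0 = 1`. -/
structure SeparatedMultiple {n : ℕ} (G : (Fin n → ℂ) × (Fin n → ℂ) → ℂ)
    (a d : (Fin n → ℂ) → ℂ) (U : (Fin n → ℂ) × (Fin n → ℂ) → ℂ) : Prop where
  analyticAt_left : AnalyticAt ℂ a 0
  analyticAt_right : AnalyticAt ℂ d 0
  left_zero : a 0 = 0
  right_zero : d 0 = 0
  differentiableAt_unit : DifferentiableAt ℂ U 0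
  unit_zero : U 0 = 1
  eventually_eq : ∀ᶠ q in 𝓝 0, a q.1 + d q.2 = U q * G q

section Existence

variable {n : ℕ} {G U : (Fin n → ℂ) × (Fin n → ℂ) → ℂ} {a d : (Fin n → ℂ) → ℂ}

theorem SeparatedIntegral.exists_separatedMultiple {e : Fin n} (h : SeparatedIntegral G e a d)
    (hG : NearModel G) (hG0 : G 0 = 0) : ∃ a d U, SeparatedMultiple G a d U := by
  obtain ⟨U, hU, hU0, h_eq⟩ := h.exists_eq_unit_mul hG
  have h_mem : (0 : Fin n → ℂ) ∈ slab e 2 := by simp [slab]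
  have h_sum : a 0 + d 0 = 0 := by simpa [hG0] using h_eq.self_of_nhds
  refine ⟨fun z => (U 0)⁻¹ * (a z - a 0), fun w => (U 0)⁻¹ * (d w - d 0), fun q => (U 0)⁻¹ * U q,
    analyticAt_const.mul ((h.analyticAt_left h_mem).sub analyticAt_const),
    analyticAt_const.mul ((h.analyticAt_right h_mem).sub analyticAt_const),
    by simp, by simp, hU.const_mul _, inv_mul_cancel₀ hU0, ?_⟩
  filter_upwards [h_eq] with q hq
  linear_combination (U 0)⁻¹ * hq - (U 0)⁻¹ * h_sum

theorem SeparatedMultiple.of_dilate {l : ℝ} (hl : l ≠ 0)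
    (h : SeparatedMultiple (dilate G l) a d U) : ∃ a d U, SeparatedMultiple G a d U := by
  have hlC : (l : ℂ) ≠ 0 := by exact_mod_cast hl
  have h_tendsto : Tendsto (fun q : (Fin n → ℂ) × (Fin n → ℂ) => (l : ℂ)⁻¹ • q) (𝓝 0) (𝓝 0) :=
    Continuous.tendsto' (by fun_prop) _ _ (smul_zero _)
  have h_smul : AnalyticAt ℂ (fun z : Fin n → ℂ => (l : ℂ)⁻¹ • z) 0 :=
    analyticAt_const.fun_smul analyticAt_id
  have h_left : AnalyticAt ℂ a ((l : ℂ)⁻¹ • 0) := by simpa using h.analyticAt_left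
  have h_right : AnalyticAt ℂ d ((l : ℂ)⁻¹ • 0) := by simpa using h.analyticAt_right
  have h_unit : DifferentiableAt ℂ U ((l : ℂ)⁻¹ • 0) := by simpa using h.differentiableAt_unit
  refine ⟨fun z => (l : ℂ) ^ n / 2 * a ((l : ℂ)⁻¹ • z),
    fun w => (l : ℂ) ^ n / 2 * d ((l : ℂ)⁻¹ • w), fun q => U ((l : ℂ)⁻¹ • q),
    analyticAt_const.mul (h_left.fun_comp h_smul), analyticAt_const.mul (h_right.fun_comp h_smul),
    by simp [h.left_zero], by simp [h.right_zero],
    h_unit.fun_comp' (f := fun q => (l : ℂ)⁻¹ • q) 0 (by fun_prop), by simp [h.unit_zero], ?_⟩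
  filter_upwards [h_tendsto.eventually h.eventually_eq] with q hq
  rw [dilate, smul_inv_smul₀ hlC, Prod.smul_fst, Prod.smul_snd, smul_eq_mul] at hq
  rw [← mul_add, hq]
  field_simp

theorem exists_separatedMultiple (hn : n ≠ 0) {F : (Fin n → ℂ) → ℝ} (hLF : LeviFlatGerm F)
    (hG : IsComplexification F G)
    (h_ord : (fun q => G q - prodModel q / 2) =O[𝓝 0] fun q => ‖q‖ ^ (n + 1)) :
    ∃ a d U, SeparatedMultiple G a d U := by
  have hG0 : G 0 = 0 := by
    have h_zero := Asymptotics.IsBigO.eq_zero_of_norm_pow 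
      (x₀ := (0 : (Fin n → ℂ) × (Fin n → ℂ))) (by simpa using h_ord) n.succ_ne_zero
    simpa [prodModel, hn] using h_zero
  obtain ⟨l, hl, h_near, h_levi⟩ := (eventually_mem_nhdsWithin.and
    ((eventually_nearModel_dilate hG.1 h_ord).and
      (eventually_leviFlatOnConjDiag_dilate hLF hG (controlRadius n)))).exists
  obtain ⟨a, d, h_int⟩ := h_near.exists_separatedIntegral h_levi ⟨0, Nat.pos_of_ne_zero hn⟩
  obtain ⟨a, d, U, h⟩ := h_int.exists_separatedMultiple h_near (by simp [dilate, hG0])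
  exact h.of_dilate (ne_of_gt hl)

end Existence

section DefiningFunction

variable {n : ℕ} {G U : (Fin n → ℂ) × (Fin n → ℂ) → ℂ} {a d : (Fin n → ℂ) → ℂ}

theorem isBigO_complexification_sub_prodModel {F : (Fin n → ℂ) → ℝ}
    (hF : (fun z => F z - (∏ i, z i).re) =O[𝓝 0] fun z => ‖z‖ ^ (n + 1))
    (hG : IsComplexification F G) :
    (fun q => G q - prodModel q / 2) =O[𝓝 0] fun q => ‖q‖ ^ (n + 1) := by
  refine isBigO_norm_pow_of_conjDiag
    (hG.1.sub ((analyticAt_prodModel _).div analyticAt_const two_ne_zero)) ?_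
  refine (Complex.isBigO_ofReal_left.2 hF).congr' ?_ EventuallyEq.rfl
  filter_upwards [hG.2] with z hz
  rw [hz, prodModel_prodMk_star]
  push_cast
  ring

theorem isBigO_prodModel : (prodModel (n := n)) =O[𝓝 0] fun q => ‖q‖ ^ n := by
  refine Asymptotics.IsBigO.of_bound 2 (Eventually.of_forall fun q => ?_)
  have h_fst := norm_prod_le_pow_card fun i => (norm_le_pi_norm q.1 i).trans (norm_fst_le q)
  have h_snd := norm_prod_le_pow_card fun i => (norm_le_pi_norm q.2 i).trans (norm_snd_le q)
  rw [Fintype.card_fin] at h_fst h_snd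
  rw [norm_pow, norm_norm, prodModel]
  linarith [norm_add_le (∏ i, q.1 i) (∏ i, q.2 i)]

theorem isBigO_mul_sub_prodModel (hU : DifferentiableAt ℂ U 0) (hU0 : U 0 = 1)
    (h_ord : (fun q => G q - prodModel q / 2) =O[𝓝 0] fun q => ‖q‖ ^ (n + 1)) :
    (fun q => U q * G q - prodModel q / 2) =O[𝓝 0] fun q => ‖q‖ ^ (n + 1) := by
  have h_unit : (fun q => U q * (G q - prodModel q / 2)) =O[𝓝 0] fun q => ‖q‖ ^ (n + 1) := by
    simpa using (hU.continuousAt.tendsto.isBigO_one ℝ).mul h_ord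
  have h_sub : (fun q => U q - 1) =O[𝓝 0] fun q => ‖q‖ := by
    simpa [hU0] using hU.isBigO_sub.norm_right
  have h_model : (fun q => 1 / 2 * ((U q - 1) * prodModel q)) =O[𝓝 0] fun q => ‖q‖ ^ (n + 1) := by
    simpa only [pow_succ'] using (h_sub.mul isBigO_prodModel).const_mul_left (1 / 2)
  exact (h_unit.add h_model).congr_left fun q => by ring

namespace SeparatedMultiple

theorem isBigO_left_sub (h : SeparatedMultiple G a d U) (hn : n ≠ 0)
    (h_ord : (fun q => G q - prodModel q / 2) =O[𝓝 0] fun q => ‖q‖ ^ (n + 1)) :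
    (fun z => a z - (∏ i, z i) / 2) =O[𝓝 0] fun z => ‖z‖ ^ (n + 1) := by
  have h_tendsto : Tendsto (fun z : Fin n → ℂ => (z, (0 : Fin n → ℂ))) (𝓝 0) (𝓝 0) :=
    Continuous.tendsto' (by fun_prop) _ _ rfl
  refine ((isBigO_mul_sub_prodModel h.differentiableAt_unit h.unit_zero h_ord).comp_tendsto
    h_tendsto).congr' ?_ (Eventually.of_forall fun z => by simp [Prod.norm_def])
  filter_upwards [h_tendsto.eventually h.eventually_eq] with z hz
  simp [← hz, h.right_zero, prodModel, hn]

theorem isBigO_right_sub (h : SeparatedMultiple G a d U) (hn : n ≠ 0)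
    (h_ord : (fun q => G q - prodModel q / 2) =O[𝓝 0] fun q => ‖q‖ ^ (n + 1)) :
    (fun w => d w - (∏ i, w i) / 2) =O[𝓝 0] fun w => ‖w‖ ^ (n + 1) := by
  have h_tendsto : Tendsto (fun w : Fin n → ℂ => ((0 : Fin n → ℂ), w)) (𝓝 0) (𝓝 0) :=
    Continuous.tendsto' (by fun_prop) _ _ rfl
  refine ((isBigO_mul_sub_prodModel h.differentiableAt_unit h.unit_zero h_ord).comp_tendsto
    h_tendsto).congr' ?_ (Eventually.of_forall fun w => by simp [Prod.norm_def])
  filter_upwards [h_tendsto.eventually h.eventually_eq] with w hw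
  simp [← hw, h.left_zero, prodModel, hn]

theorem isBigO_add_star_sub_prod (h : SeparatedMultiple G a d U) (hn : n ≠ 0)
    (h_ord : (fun q => G q - prodModel q / 2) =O[𝓝 0] fun q => ‖q‖ ^ (n + 1)) :
    (fun z => a z + star (d (star z)) - ∏ i, z i) =O[𝓝 0] fun z => ‖z‖ ^ (n + 1) := by
  have h_tendsto : Tendsto (star : (Fin n → ℂ) → Fin n → ℂ) (𝓝 0) (𝓝 0) :=
    Continuous.tendsto' (by fun_prop) _ _ (star_zero _)
  have h_star : (fun z => star (d (star z) - (∏ i, star z i) / 2)) =O[𝓝 0]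
      fun z => ‖z‖ ^ (n + 1) := by
    refine Asymptotics.IsBigO.of_norm_left ?_
    simp only [norm_star]
    simpa [Function.comp_def] using ((h.isBigO_right_sub hn h_ord).comp_tendsto h_tendsto).norm_left
  refine ((h.isBigO_left_sub hn h_ord).add h_star).congr_left fun z => ?_
  simp
  ring

theorem eventually_eq_zero_iff_re (h : SeparatedMultiple G a d U) {F : (Fin n → ℂ) → ℝ}
    (hG : IsComplexification F G) :
    ∀ᶠ z in 𝓝 0, F z = 0 ↔ (a z + star (d (star z))).re = 0 := by
  have h_unit : Tendsto (fun z => (U (z, star z)).re) (𝓝 0) (𝓝 1) := by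
    have h_tendsto := h.differentiableAt_unit.continuousAt.tendsto.comp tendsto_prodMk_star_zero
    rw [h.unit_zero] at h_tendsto
    exact (Complex.continuous_re.tendsto 1).comp h_tendsto
  filter_upwards [h_unit.eventually_const_lt zero_lt_one, hG.2,
    tendsto_prodMk_star_zero.eventually h.eventually_eq] with z h_pos hz h_eq
  have h_re : (a z + star (d (star z))).re = (U (z, star z)).re * F z := by
    calc (a z + star (d (star z))).re = (a z + d (star z)).re := by simp
      _ = (U (z, star z)).re * F z := by rw [h_eq, hz, Complex.re_mul_ofReal]
  rw [h_re, mul_eq_zero, or_iff_right h_pos.ne']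

end SeparatedMultiple

end DefiningFunction

theorem stmt_2_general {n : ℕ} (hn : n ≠ 0) {F : (Fin n → ℂ) → ℝ}
    (hF : (fun z => F z - (∏ i, z i).re) =O[𝓝 0] fun z => ‖z‖ ^ (n + 1))
    (hLF : LeviFlatGerm F) {FC : (Fin n → ℂ) × (Fin n → ℂ) → ℂ} (hFC : IsComplexification F FC) :
    ∃ f : (Fin n → ℂ) → ℂ, AnalyticAt ℂ f 0 ∧
      ((fun z => f z - ∏ i, z i) =O[𝓝 0] fun z => ‖z‖ ^ (n + 1)) ∧
      ∀ᶠ z in 𝓝 0, F z = 0 ↔ (f z).re = 0 := by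
  have h_ord := isBigO_complexification_sub_prodModel hF hFC
  obtain ⟨a, d, U, h⟩ := exists_separatedMultiple hn hLF hFC h_ord
  exact ⟨fun z => a z + star (d (star z)),
    h.analyticAt_left.add (analyticAt_star_comp_star h.analyticAt_right),
    h.isBigO_add_star_sub_prod hn h_ord, h.eventually_eq_zero_iff_re hFC⟩

/-- **Theorem 3.** A singular Levi-flat hypersurface `{Re(z₁⋯zₙ) + O(|z|^{n+1}) = 0}`
whose complexified singular set is the expected union of linear subspaces `V_{ijkℓ}`
and is contained in the closure of `Sing(L_ℂ)` is defined by the vanishing of the real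
part of a holomorphic function `f(z) = z₁⋯zₙ + O(|z|^{n+1})`. -/
theorem stmt_2 (n : ℕ) (hn : 2 ≤ n) (F H : (Fin n → ℂ) → ℝ)
    (hF : AnalyticAt ℝ F 0) (hH : AnalyticAt ℝ H 0)
    -- `F(z) = Re(z₁ ⋯ zₙ) + H(z, z̄)` with `H = O(|z|^{n+1})`
    (hFeq : ∀ᶠ z in 𝓝 (0 : Fin n → ℂ), F z = (∏ i, z i).re + H z)
    (hHord : (fun z : Fin n → ℂ => H z) =O[𝓝 0] fun z => ‖z‖ ^ (n + 1))
    -- `M = {F = 0}` is a singular hypersurface at `0`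
    (hF0 : F 0 = 0) (hsing : fderiv ℝ F 0 = 0)
    (hirr : IrreducibleRGerm F)
    (hLF : LeviFlatGerm F)
    (FC : ((Fin n → ℂ) × (Fin n → ℂ)) → ℂ) (hFC : IsComplexification F FC)
    -- `Sing(M_ℂ)` is the union of the subspaces `V_{ijkℓ} = {z_i = z_j = w_k = w_ℓ = 0}`
    (hSingMC : ∀ᶠ p in 𝓝 (0 : (Fin n → ℂ) × (Fin n → ℂ)),
      (p ∈ singMC FC ↔ ∃ i j k l : Fin n, i < j ∧ k < l ∧
        p.1 i = 0 ∧ p.1 j = 0 ∧ p.2 k = 0 ∧ p.2 l = 0))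
    -- `Sing(M_ℂ)` is contained in the closure of `Sing(L_ℂ)`
    (hcl : ∃ U ∈ 𝓝 (0 : (Fin n → ℂ) × (Fin n → ℂ)),
      singMC FC ∩ U ⊆ closure (singLC FC)) :
    ∃ f : (Fin n → ℂ) → ℂ, AnalyticAt ℂ f 0 ∧
      -- `f(z) = z₁ ⋯ zₙ + O(|z|^{n+1})`
      ((fun z : Fin n → ℂ => f z - ∏ i, z i) =O[𝓝 0] fun z => ‖z‖ ^ (n + 1)) ∧
      -- `M = {Re(f) = 0}` as germs of sets at `0`
      (∀ᶠ z in 𝓝 (0 : Fin n → ℂ), (F z = 0 ↔ (f z).re = 0)) := by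
  refine stmt_2_general (by omega) (hHord.congr' ?_ EventuallyEq.rfl) hLF hFC
  filter_upwards [hFeq] with z hz using by rw [hz, add_sub_cancel_left]
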